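/- arXiv:1305.1503 — 3 statements merged into one kernel-verified Lean document; each statement's English description precedes it below -/
import Mathlib

section
/- Let R be a commutative ring and let I, J be finitely generated ideals of R. Then √I ⊆ √J if and only if Loc(R/J) ⊆ Loc(R/I). Consequently √I = √J if and only if Loc(R/I) = Loc(R/J). -/
open CategoryTheory CategoryTheory.Limits CategoryTheory.Pretriangulated ZeroObject

universe w w' v u

section TriangulatedDefs

variable {T : Type u} [Category.{v} T] [Preadditive T] [HasZeroObject T]
  [HasShift T ℤ] [∀ n : ℤ, (shiftFunctor T n).Additive] [Pretriangulated T]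

/-- A localizing subcategory of a (pre)triangulated category, encoded as a set of
objects: it is closed under isomorphisms, contains the zero object, is stable
under shifts, closed under cones of distinguished triangles (hence a full
triangulated subcategory), and closed under arbitrary small coproducts
(phrased via colimit cofans, so that no global existence of coproducts
is needed). -/
structure IsLocalizingSub (S : Set T) : Prop where
  zero_mem : (0 : T) ∈ S
  mem_of_iso : ∀ {x y : T}, (x ≅ y) → x ∈ S → y ∈ S
  shift_mem : ∀ (n : ℤ) {x : T}, x ∈ S → x⟦n⟧ ∈ S
  cone_mem : ∀ (Tr : Triangle T), Tr ∈ distinguishedTriangles →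
    Tr.obj₁ ∈ S → Tr.obj₂ ∈ S → Tr.obj₃ ∈ S
  coprod_mem : ∀ {ι : Type w} (f : ι → T) (c : Cofan f), IsColimit c →
    (∀ i, f i ∈ S) → c.pt ∈ S

/-- A colocalizing subcategory: as `IsLocalizingSub` but with products instead
of coproducts. -/
structure IsColocalizingSub (S : Set T) : Prop where
  zero_mem : (0 : T) ∈ S
  mem_of_iso : ∀ {x y : T}, (x ≅ y) → x ∈ S → y ∈ S
  shift_mem : ∀ (n : ℤ) {x : T}, x ∈ S → x⟦n⟧ ∈ S
  cone_mem : ∀ (Tr : Triangle T), Tr ∈ distinguishedTriangles →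
    Tr.obj₁ ∈ S → Tr.obj₂ ∈ S → Tr.obj₃ ∈ S
  prod_mem : ∀ {ι : Type w} (f : ι → T) (c : Fan f), IsLimit c →
    (∀ i, f i ∈ S) → c.pt ∈ S

/-- `Loc S`: the smallest localizing subcategory containing the set of
objects `S` (the intersection of all localizing subcategories containing it). -/
def Loc (S : Set T) : Set T :=
  ⋂₀ {L : Set T | IsLocalizingSub.{w} L ∧ S ⊆ L}

/-- The right orthogonal of a set of objects. -/
def rightOrth (C : Set T) : Set T :=
  {x : T | ∀ ⦃c : T⦄, c ∈ C → ∀ (g : c ⟶ x), g = 0}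

end TriangulatedDefs

section CompactDefs

variable {T : Type u} [Category.{v} T] [Preadditive T]

/-- The canonical comparison map `⨁ᵢ Hom(x, fᵢ) →+ Hom(x, ∐ f)` associated to a
cofan `c` on a family `f`. -/
noncomputable def cofanHomComparison {ι : Type w} (x : T) (f : ι → T) (c : Cofan f) :
    (Π₀ i, (x ⟶ f i)) →+ (x ⟶ c.pt) :=
  letI := Classical.decEq ι
  DFinsupp.sumAddHom (fun i => AddMonoidHom.mk' (fun φ => φ ≫ c.inj i)
    (fun φ ψ => Preadditive.add_comp _ _ _ φ ψ (c.inj i)))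

/-- An object `x` is compact if `Hom(x, -)` commutes with arbitrary small
coproducts, i.e. for every colimit cofan on a family `f`, the canonical map
`⨁ᵢ Hom(x, fᵢ) → Hom(x, ∐ f)` is bijective. -/
def IsCompactObj (x : T) : Prop :=
  ∀ ⦃ι : Type w⦄ (f : ι → T) (c : Cofan f), IsColimit c →
    Function.Bijective (cofanHomComparison x f c)

end CompactDefs

section DR

variable (R : Type u) [CommRing R] [HasDerivedCategory.{w'} (ModuleCat.{u} R)]

/-- The `R`-module `M`, regarded as an object of the derived category `D(R)`,
as a complex concentrated in degree `0`. -/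
noncomputable def smod (M : ModuleCat.{u} R) : DerivedCategory (ModuleCat.{u} R) :=
  (DerivedCategory.singleFunctor (ModuleCat.{u} R) 0).obj M

end DR
namespace RadLoc

lemma sc_quasiIso_iff {R : Type u} [CommRing R] {S₁ S₂ : ShortComplex (ModuleCat.{u} R)}
    (φ : S₁ ⟶ S₂) : ShortComplex.QuasiIso φ ↔
      (∀ x : S₁.X₂, S₁.g x = 0 → (∃ z, S₂.f z = φ.τ₂ x) → ∃ w, S₁.f w = x) ∧
      (∀ y : S₂.X₂, S₂.g y = 0 → ∃ x : S₁.X₂, S₁.g x = 0 ∧ ∃ z, S₂.f z = φ.τ₂ x - y) := by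
  have c12 : ∀ x, φ.τ₂ (S₁.f x) = S₂.f (φ.τ₁ x) := fun x => by
    have := congr($(φ.comm₁₂).hom x); simpa using this.symm
  have c23 : ∀ x, φ.τ₃ (S₁.g x) = S₂.g (φ.τ₂ x) := fun x => by
    have := congr($(φ.comm₂₃).hom x); simpa using this.symm
  let k : LinearMap.ker S₁.g.hom →ₗ[R] LinearMap.ker S₂.g.hom :=
    φ.τ₂.hom.restrict (fun x hx => by
      have hx' : S₁.g x = 0 := hx
      change S₂.g (φ.τ₂ x) = 0
      rw [← c23, hx', map_zero])
  have hk : LinearMap.range S₁.moduleCatToCycles ≤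
      (LinearMap.range S₂.moduleCatToCycles).comap k := by
    rintro _ ⟨x, rfl⟩
    exact ⟨φ.τ₁ x, Subtype.ext (c12 x).symm⟩
  let γ : ShortComplex.LeftHomologyMapData φ S₁.moduleCatLeftHomologyData
      S₂.moduleCatLeftHomologyData :=
    { φK := ModuleCat.ofHom k
      φH := ModuleCat.ofHom (Submodule.mapQ _ _ k hk)
      commi := by ext x; rfl
      commf' := by ext x; exact Subtype.ext (c12 x)
      commπ := by ext x; rfl }
  rw [γ.quasiIso_iff]
  have : IsIso γ.φH ↔ Function.Bijective (Submodule.mapQ _ _ k hk) :=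
    (ConcreteCategory.isIso_iff_bijective γ.φH)
  rw [this, Function.Bijective]
  refine and_congr ?_ ?_
  · rw [← LinearMap.ker_eq_bot, LinearMap.ker_eq_bot']
    constructor
    · intro h x hx ⟨z, hz⟩
      have := h (Submodule.Quotient.mk ⟨x, hx⟩) ((Submodule.Quotient.mk_eq_zero _).2
        ⟨z, Subtype.ext hz⟩)
      obtain ⟨w, hw⟩ := (Submodule.Quotient.mk_eq_zero _).1 this
      exact ⟨w, congrArg Subtype.val hw⟩
    · intro h m hm
      obtain ⟨⟨x, hx⟩, rfl⟩ := Submodule.Quotient.mk_surjective _ m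
      obtain ⟨z, hz⟩ := (Submodule.Quotient.mk_eq_zero _).1 hm
      obtain ⟨w, hw⟩ := h x hx ⟨z, congrArg Subtype.val hz⟩
      exact (Submodule.Quotient.mk_eq_zero _).2 ⟨w, Subtype.ext hw⟩
  · constructor
    · intro h y hy
      obtain ⟨m, hm⟩ := h (Submodule.Quotient.mk ⟨y, hy⟩)
      obtain ⟨⟨x, hx⟩, rfl⟩ := Submodule.Quotient.mk_surjective _ m
      obtain ⟨z, hz⟩ := (Submodule.Quotient.eq _).1 hm
      exact ⟨x, hx, z, congrArg Subtype.val hz⟩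
    · intro h m
      obtain ⟨⟨y, hy⟩, rfl⟩ := Submodule.Quotient.mk_surjective _ m
      obtain ⟨x, hx, z, hz⟩ := h y hy
      exact ⟨Submodule.Quotient.mk ⟨x, hx⟩, (Submodule.Quotient.eq _).2 ⟨z, Subtype.ext hz⟩⟩

lemma quasiIso_iff_elem {R : Type u} [CommRing R] {K L : CochainComplex (ModuleCat.{u} R) ℤ}
    (f : K ⟶ L) : QuasiIso f ↔ ∀ n : ℤ,
      (∀ x : K.X n, K.d n (n+1) x = 0 → (∃ z, L.d (n-1) n z = f.f n x) → ∃ w, K.d (n-1) n w = x) ∧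
      (∀ y : L.X n, L.d n (n+1) y = 0 → ∃ x : K.X n, K.d n (n+1) x = 0 ∧
        ∃ z, L.d (n-1) n z = f.f n x - y) := by
  rw [quasiIso_iff]
  refine forall_congr' fun n => ?_
  rw [quasiIsoAt_iff' f (n-1) n (n+1) (by simp) (by simp)]
  exact sc_quasiIso_iff _

section dsum
variable {R : Type u} [CommRing R] {ι : Type u}

/-- The direct sum of a family of complexes of modules. -/
noncomputable def dsum (K : ι → CochainComplex (ModuleCat.{u} R) ℤ) :
    CochainComplex (ModuleCat.{u} R) ℤ where
  X n := ModuleCat.of R (Π₀ i, (K i).X n)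
  d n m := ModuleCat.ofHom (DFinsupp.mapRange.linearMap (fun i => ((K i).d n m).hom))
  shape n m h := by
    refine ModuleCat.hom_ext (LinearMap.ext fun (x : Π₀ i, (K i).X n) => ?_)
    refine DFinsupp.ext (β := fun i => (K i).X m) fun i => ?_
    change ((K i).d n m).hom (x i) = 0
    rw [(K i).shape n m h]; rfl
  d_comp_d' n m k _ _ := by
    refine ModuleCat.hom_ext (LinearMap.ext fun (x : Π₀ i, (K i).X n) => ?_)
    refine DFinsupp.ext (β := fun i => (K i).X k) fun i => ?_
    change ((K i).d m k).hom (((K i).d n m).hom (x i)) = 0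
    have := congr($((K i).d_comp_d n m k).hom (x i))
    exact this

/-- Inclusion of a summand. -/
noncomputable def dinj [DecidableEq ι] (K : ι → CochainComplex (ModuleCat.{u} R) ℤ) (i : ι) :
    K i ⟶ dsum K where
  f n := ModuleCat.ofHom (DFinsupp.lsingle (M := fun i => (K i).X n) i)
  comm' n m _ := by
    ext x
    exact DFinsupp.mapRange_single (f := fun i => ((K i).d n m).hom) (hf := fun i => map_zero _)

lemma dsum_X_ext [DecidableEq ι] (K : ι → CochainComplex (ModuleCat.{u} R) ℤ) {n : ℤ}
    {Y : ModuleCat.{u} R} (f g : (dsum K).X n ⟶ Y)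
    (h : ∀ i, (dinj K i).f n ≫ f = (dinj K i).f n ≫ g) : f = g := by
  apply ModuleCat.hom_ext
  refine DFinsupp.lhom_ext' (M := fun i => (K i).X n) fun i => ?_
  exact congr($(h i).hom)

/-- Degreewise map out of a direct sum. -/
noncomputable def ddescX [DecidableEq ι] (K : ι → CochainComplex (ModuleCat.{u} R) ℤ) {n : ℤ}
    {Y : ModuleCat.{u} R} (f : ∀ i, (K i).X n ⟶ Y) : (dsum K).X n ⟶ Y :=
  ModuleCat.ofHom (DFinsupp.lsum ℕ (fun i => (f i).hom))

lemma dinj_ddescX [DecidableEq ι] (K : ι → CochainComplex (ModuleCat.{u} R) ℤ) {n : ℤ}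
    {Y : ModuleCat.{u} R} (f : ∀ i, (K i).X n ⟶ Y) (i : ι) :
    (dinj K i).f n ≫ ddescX K f = f i := by
  ext x
  exact DFinsupp.lsum_single (R := R) ℕ (M := fun i => (K i).X n) (fun i => (f i).hom) i x

/-- Map out of a direct sum. -/
noncomputable def ddesc [DecidableEq ι] (K : ι → CochainComplex (ModuleCat.{u} R) ℤ)
    {L : CochainComplex (ModuleCat.{u} R) ℤ} (f : ∀ i, K i ⟶ L) : dsum K ⟶ L where
  f n := ddescX K (fun i => (f i).f n)
  comm' n m _ := by
    refine dsum_X_ext K _ _ fun i => ?_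
    rw [← Category.assoc, dinj_ddescX, HomologicalComplex.Hom.comm_assoc, dinj_ddescX,
      HomologicalComplex.Hom.comm]

lemma dinj_ddesc [DecidableEq ι] (K : ι → CochainComplex (ModuleCat.{u} R) ℤ)
    {L : CochainComplex (ModuleCat.{u} R) ℤ} (f : ∀ i, K i ⟶ L) (i : ι) :
    dinj K i ≫ ddesc K f = f i := by
  ext n : 1
  exact dinj_ddescX _ _ _

/-- Direct sum of maps. -/
noncomputable def dmap {K L : ι → CochainComplex (ModuleCat.{u} R) ℤ}
    (f : ∀ i, K i ⟶ L i) : dsum K ⟶ dsum L where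
  f n := ModuleCat.ofHom (DFinsupp.mapRange.linearMap (fun i => ((f i).f n).hom))
  comm' n m _ := by
    refine ModuleCat.hom_ext (LinearMap.ext fun (x : Π₀ i, (K i).X n) => ?_)
    refine DFinsupp.ext (β := fun i => (L i).X m) fun i => ?_
    exact congr($((f i).comm n m).hom (x i))

lemma dinj_dmap [DecidableEq ι] {K L : ι → CochainComplex (ModuleCat.{u} R) ℤ}
    (f : ∀ i, K i ⟶ L i) (i : ι) : dinj K i ≫ dmap f = f i ≫ dinj L i := by
  ext n x
  exact DFinsupp.mapRange_single (f := fun i => ((f i).f n).hom) (hf := fun i => map_zero _)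

lemma exists_dfinsupp {ι : Type*} {A B : ι → Type*} [∀ i, AddCommGroup (A i)]
    [∀ i, AddCommGroup (B i)] (x : Π₀ i, A i) (P : ∀ i, A i → B i → Prop)
    (h0 : ∀ i, P i 0 0) (h : ∀ i, ∃ b, P i (x i) b) : ∃ y : Π₀ i, B i, ∀ i, P i (x i) (y i) := by
  classical
  choose b hb using h
  refine ⟨DFinsupp.mk x.support (fun i => b i), fun i => ?_⟩
  by_cases hi : i ∈ x.support
  · rw [DFinsupp.mk_of_mem hi]; exact hb i
  · rw [DFinsupp.mk_of_notMem hi, DFinsupp.notMem_support_iff.1 hi]; exact h0 i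

lemma quasiIso_dmap {K L : ι → CochainComplex (ModuleCat.{u} R) ℤ}
    (f : ∀ i, K i ⟶ L i) (hf : ∀ i, QuasiIso (f i)) : QuasiIso (dmap f) := by
  have hf' := fun i => (quasiIso_iff_elem (f i)).1 (hf i)
  rw [quasiIso_iff_elem]
  intro n
  constructor
  · rintro (x : Π₀ i, (K i).X n) hx ⟨(z : Π₀ i, (L i).X (n-1)), hz⟩
    obtain ⟨w, hw⟩ := exists_dfinsupp (A := fun i => (K i).X n) (B := fun i => (K i).X (n-1)) x
      (fun i a b => (K i).d (n-1) n b = a) (fun i => map_zero _)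
      (fun i => ((hf' i n).1 (x i) (DFunLike.congr_fun (F := Π₀ i, (K i).X (n+1)) hx i) ⟨z i, DFunLike.congr_fun (F := Π₀ i, (L i).X n) hz i⟩))
    exact ⟨w, DFinsupp.ext hw⟩
  · intro (y : Π₀ i, (L i).X n) hy
    obtain ⟨x, hx⟩ := exists_dfinsupp (A := fun i => (L i).X n)
      (B := fun i => (K i).X n × (L i).X (n-1)) y
      (fun i a b => (K i).d n (n+1) b.1 = 0 ∧ (L i).d (n-1) n b.2 = (f i).f n b.1 - a)
      (fun i => by simp)
      (fun i => by
        obtain ⟨x, hx, z, hz⟩ := (hf' i n).2 (y i) (DFunLike.congr_fun (F := Π₀ i, (L i).X (n+1)) hy i)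
        exact ⟨(x, z), hx, hz⟩)
    refine ⟨x.mapRange (fun i => Prod.fst) (fun i => rfl), DFinsupp.ext fun i => ?_,
      x.mapRange (fun i => Prod.snd) (fun i => rfl), DFinsupp.ext fun i => ?_⟩
    · exact (hx i).1
    · exact (hx i).2

/-- Direct sum of null-homotopies. -/
noncomputable def dHomotopy [DecidableEq ι] (K : ι → CochainComplex (ModuleCat.{u} R) ℤ)
    {L : CochainComplex (ModuleCat.{u} R) ℤ} (g : dsum K ⟶ L)
    (h : ∀ i, Homotopy (dinj K i ≫ g) 0) : Homotopy g 0 where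
  hom n m := ddescX K (fun i => (h i).hom n m)
  zero n m hnm := by
    refine dsum_X_ext K _ _ fun i => ?_
    rw [dinj_ddescX, (h i).zero n m hnm, comp_zero]
  comm n := by
    refine dsum_X_ext K _ _ fun i => ?_
    have := (h i).comm n
    rw [Preadditive.comp_add, Preadditive.comp_add, ← dNext_comp_left, ← prevD_comp_left]
    simpa [dinj_ddescX] using this

variable [HasDerivedCategory.{w'} (ModuleCat.{u} R)]
open DerivedCategory

lemma exists_homotopy_of_Q_map_eq_zero {K L : CochainComplex (ModuleCat.{u} R) ℤ} (g : K ⟶ L)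
    (hg : Q.map g = 0) : ∃ (K' : CochainComplex (ModuleCat.{u} R) ℤ) (s : K' ⟶ K),
      QuasiIso s ∧ Nonempty (Homotopy (s ≫ g) 0) := by
  have h : Qh.map ((HomotopyCategory.quotient _ _).map g) =
      Qh.map ((HomotopyCategory.quotient _ _).map (0 : K ⟶ L)) := by
    rw [← cancel_mono ((quotientCompQhIso _).hom.app L), quotientCompQhIso_hom_naturality,
      quotientCompQhIso_hom_naturality, hg, Q.map_zero]
  rw [MorphismProperty.map_eq_iff_precomp Qh
    (HomotopyCategory.quasiIso (ModuleCat.{u} R) (ComplexShape.up ℤ))] at h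
  obtain ⟨X', s, hs, e⟩ := h
  obtain ⟨X', rfl⟩ := HomotopyCategory.quotient_obj_surjective X'
  obtain ⟨s, rfl⟩ := (HomotopyCategory.quotient _ _).map_surjective s
  rw [← Functor.map_comp, ← Functor.map_comp] at e
  rw [HomotopyCategory.quotient_map_mem_quasiIso_iff] at hs
  refine ⟨X', s, hs, ⟨(HomotopyCategory.homotopyOfEq _ _ e).trans (Homotopy.ofEq (by simp))⟩⟩

/-- The cofan in the derived category. -/
noncomputable def Qcofan [DecidableEq ι] (K : ι → CochainComplex (ModuleCat.{u} R) ℤ) :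
    Cofan (fun i => Q.obj (K i)) := Cofan.mk (Q.obj (dsum K)) (fun i => Q.map (dinj K i))

lemma Q_dsum_hom_ext [DecidableEq ι] (K : ι → CochainComplex (ModuleCat.{u} R) ℤ)
    {Z : DerivedCategory (ModuleCat.{u} R)} (f : Q.obj (dsum K) ⟶ Z)
    (h : ∀ i, Q.map (dinj K i) ≫ f = 0) : f = 0 := by
  obtain ⟨L, ⟨e⟩⟩ : ∃ L, Nonempty (Q.obj L ≅ Z) := ⟨_, ⟨Q.objObjPreimageIso Z⟩⟩
  rw [← cancel_mono e.inv, zero_comp]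
  obtain ⟨L', g, s, hs, hg⟩ := left_fac (f ≫ e.inv)
  have h' : ∀ i, Q.map (dinj K i ≫ g) = 0 := fun i => by
    rw [← cancel_mono (inv (Q.map s)), Q.map_comp, Category.assoc, ← hg, ← Category.assoc, h]
    simp
  choose K' t ht H using fun i => exists_homotopy_of_Q_map_eq_zero _ (h' i)
  have := quasiIso_dmap t ht
  have H' : Homotopy (dmap t ≫ g) 0 := dHomotopy K' _ (fun i =>
    (Homotopy.ofEq (by rw [← Category.assoc, ← Category.assoc, dinj_dmap])).trans (H i).some)
  have h0 : Q.map g = 0 := by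
    rw [← cancel_epi (Q.map (dmap t)), ← Q.map_comp, Q_map_eq_of_homotopy _ H']
    simp
  rw [hg, h0, zero_comp]

lemma Q_dsum_hom_ext' [DecidableEq ι] (K : ι → CochainComplex (ModuleCat.{u} R) ℤ)
    {Z : DerivedCategory (ModuleCat.{u} R)} (f g : Q.obj (dsum K) ⟶ Z)
    (h : ∀ i, Q.map (dinj K i) ≫ f = Q.map (dinj K i) ≫ g) : f = g := by
  rw [← sub_eq_zero]
  apply Q_dsum_hom_ext
  intro i
  rw [Preadditive.comp_sub, sub_eq_zero, h i]

lemma Q_dsum_desc [DecidableEq ι] (K : ι → CochainComplex (ModuleCat.{u} R) ℤ)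
    {Z : DerivedCategory (ModuleCat.{u} R)} (f : ∀ i, Q.obj (K i) ⟶ Z) :
    ∃ g : Q.obj (dsum K) ⟶ Z, ∀ i, Q.map (dinj K i) ≫ g = f i := by
  obtain ⟨L, ⟨e⟩⟩ : ∃ L, Nonempty (Q.obj L ≅ Z) := ⟨_, ⟨Q.objObjPreimageIso Z⟩⟩
  choose K' t ht g hg using fun i => right_fac (f i ≫ e.inv)
  have := quasiIso_dmap t (fun i => (isIso_Q_map_iff_quasiIso _ _).1 (ht i))
  refine ⟨inv (Q.map (dmap t)) ≫ Q.map (ddesc K' g) ≫ e.hom, fun i => ?_⟩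
  rw [← cancel_mono e.inv, hg, ← cancel_epi (Q.map (t i)), IsIso.hom_inv_id_assoc,
    Category.assoc, ← Q.map_comp_assoc, ← dinj_dmap]
  rw [Q.map_comp, Category.assoc, Category.assoc, Category.assoc, IsIso.hom_inv_id_assoc,
    ← Q.map_comp_assoc, dinj_ddesc, Iso.hom_inv_id, Category.comp_id]

/-- `Q` sends direct sums to coproducts. -/
noncomputable def isColimitQcofan [DecidableEq ι]
    (K : ι → CochainComplex (ModuleCat.{u} R) ℤ) : IsColimit (Qcofan K) :=
  Cofan.IsColimit.mk _ (fun s => (Q_dsum_desc K s.inj).choose)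
    (fun s i => (Q_dsum_desc K s.inj).choose_spec i)
    (fun s m hm => by
      exact Q_dsum_hom_ext' K m _ fun i => (hm i).trans ((Q_dsum_desc K s.inj).choose_spec i).symm)

end dsum
end RadLoc

namespace RadLoc
section partB
open DerivedCategory
variable {R : Type u} [CommRing R] [HasDerivedCategory.{w'} (ModuleCat.{u} R)]

/-- Objects with no maps to `x`-divisible objects. -/
def orthX (x : R) : Set (DerivedCategory (ModuleCat.{u} R)) :=
  {X | ∀ Z : DerivedCategory (ModuleCat.{u} R), IsIso (x • 𝟙 Z) → ∀ f : X ⟶ Z, f = 0}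

lemma isIso_smul_shift (x : R) (Z : DerivedCategory (ModuleCat.{u} R)) (n : ℤ)
    (h : IsIso (x • 𝟙 Z)) : IsIso (x • 𝟙 (Z⟦n⟧)) := by
  have : x • 𝟙 (Z⟦n⟧) = (x • 𝟙 Z)⟦n⟧' := by
    rw [Functor.map_smul, CategoryTheory.Functor.map_id]
  rw [this]
  infer_instance

lemma orthX_shift (x : R) {X : DerivedCategory (ModuleCat.{u} R)} (hX : X ∈ orthX x) (n : ℤ) :
    X⟦n⟧ ∈ orthX x := by
  intro Z hZ f
  have h1 := hX (Z⟦-n⟧) (isIso_smul_shift x Z _ hZ)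
    ((shiftFunctorCompIsoId (DerivedCategory (ModuleCat.{u} R)) n (-n) (by simp)).inv.app X ≫ f⟦-n⟧')
  have h2 : f⟦-n⟧' = 0 := by
    rw [← cancel_epi ((shiftFunctorCompIsoId (DerivedCategory (ModuleCat.{u} R)) n (-n)
      (by simp)).inv.app X), comp_zero]
    exact h1
  exact (shiftFunctor (DerivedCategory (ModuleCat.{u} R)) (-n)).map_injective
    (h2.trans (Functor.map_zero _ _ _).symm)

lemma isLocalizingSub_orthX (x : R) :
    IsLocalizingSub.{u} (orthX x : Set (DerivedCategory (ModuleCat.{u} R))) where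
  zero_mem Z _ f := (isZero_zero _).eq_of_src _ _
  mem_of_iso e hX Z hZ f := by
    rw [← cancel_epi e.hom, comp_zero]
    exact hX Z hZ _
  shift_mem n _ hX := orthX_shift x hX n
  cone_mem Tr hT h1 h2 Z hZ f := by
    obtain ⟨g, rfl⟩ := Triangle.yoneda_exact₃ Tr hT f (h2 Z hZ _)
    rw [orthX_shift x h1 1 Z hZ g, comp_zero]
  coprod_mem f c hc h Z hZ g := by
    refine Cofan.IsColimit.hom_ext hc _ _ fun i => ?_
    rw [comp_zero]
    exact h i Z hZ _

lemma smod_mem_orthX (I : Ideal R) (x : R) (hx : x ∈ I) :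
    smod R (ModuleCat.of R (R ⧸ I)) ∈ orthX x := by
  intro Z hZ f
  have h0 : x • 𝟙 (ModuleCat.of R (R ⧸ I)) = 0 := by
    refine ModuleCat.hom_ext (LinearMap.ext fun y => ?_)
    obtain ⟨y, rfl⟩ := Ideal.Quotient.mk_surjective y
    change x • (Ideal.Quotient.mk I y) = 0
    rw [← Ideal.Quotient.mk_eq_mk, ← Submodule.Quotient.mk_smul, Submodule.Quotient.mk_eq_zero]
    exact I.mul_mem_right _ hx
  have h1 : x • 𝟙 (smod R (ModuleCat.of R (R ⧸ I))) = 0 := by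
    unfold smod
    rw [← CategoryTheory.Functor.map_id, ← Functor.map_smul, h0, Functor.map_zero]
  rw [← cancel_mono (x • 𝟙 Z), zero_comp, Linear.comp_smul, Category.comp_id,
    ← Category.id_comp f, ← Linear.smul_comp, h1, zero_comp]

lemma mem_radical_of_mem_orthX (J : Ideal R) (x : R)
    (h : smod R (ModuleCat.of R (R ⧸ J)) ∈ orthX x) : x ∈ J.radical := by
  let M := LocalizedModule (Submonoid.powers x) (R ⧸ J)
  let f : R ⧸ J →ₗ[R] M := LocalizedModule.mkLinearMap (Submonoid.powers x) (R ⧸ J)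
  have hiso : IsIso (x • 𝟙 (ModuleCat.of R M)) := by
    rw [ConcreteCategory.isIso_iff_bijective]
    have := IsLocalizedModule.map_units f (⟨x, Submonoid.mem_powers x⟩ : Submonoid.powers x)
    rw [Module.End.isUnit_iff] at this
    exact this
  have hiso' : IsIso (x • 𝟙 (smod R (ModuleCat.of R M))) := by
    unfold smod
    rw [← CategoryTheory.Functor.map_id, ← Functor.map_smul]
    infer_instance
  have h1 := h _ hiso' ((singleFunctor _ 0).map (ModuleCat.ofHom f))
  have h2 : ModuleCat.ofHom f = 0 :=
    (singleFunctor (ModuleCat.{u} R) 0).map_injective (h1.trans (Functor.map_zero _ _ _).symm)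
  have h3 : f (Ideal.Quotient.mk J 1) = 0 := by
    have := congrArg (fun g => g.hom (Ideal.Quotient.mk J 1)) h2
    exact this
  rw [IsLocalizedModule.eq_zero_iff (Submonoid.powers x) f] at h3
  obtain ⟨⟨_, n, rfl⟩, hc⟩ := h3
  refine ⟨n, ?_⟩
  change (x ^ n) • (Ideal.Quotient.mk J 1) = 0 at hc
  rw [← Ideal.Quotient.mk_eq_mk, ← Submodule.Quotient.mk_smul, Submodule.Quotient.mk_eq_zero] at hc
  simpa using hc

lemma le_radical_of_mem (I J : Ideal R)
    (h : smod R (ModuleCat.of R (R ⧸ J)) ∈ Loc.{u} {smod R (ModuleCat.of R (R ⧸ I))}) :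
    I ≤ J.radical := fun x hx => mem_radical_of_mem_orthX J x
  (h _ ⟨isLocalizingSub_orthX x, by
    rintro _ rfl
    exact smod_mem_orthX I x hx⟩)

end partB
end RadLoc

namespace RadLoc
section partC
open DerivedCategory
variable {R : Type u} [CommRing R]

lemma ses_of_elem {K L M : CochainComplex (ModuleCat.{u} R) ℤ} (f : K ⟶ L) (g : L ⟶ M)
    (hf : ∀ n x, f.f n x = 0 → x = 0) (hg : ∀ n, Function.Surjective (g.f n))
    (h0 : f ≫ g = 0) (hfg : ∀ n y, g.f n y = 0 → ∃ x, f.f n x = y) :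
    (ShortComplex.mk f g h0).ShortExact := by
  apply HomologicalComplex.shortExact_of_degreewise_shortExact
  intro n
  have h1 := (ModuleCat.mono_iff_injective (f.f n)).2 (by
    rw [injective_iff_map_eq_zero]; exact hf n)
  have h2 := (ModuleCat.epi_iff_surjective (g.f n)).2 (hg n)
  refine ShortComplex.ShortExact.mk' ?_ h1 h2
  rw [ShortComplex.moduleCat_exact_iff]
  exact hfg n

variable [HasDerivedCategory.{w'} (ModuleCat.{u} R)]
variable {S : Set (DerivedCategory (ModuleCat.{u} R))}

lemma mem_obj₂ (hS : IsLocalizingSub.{u} S) (T : Triangle (DerivedCategory (ModuleCat.{u} R)))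
    (hT : T ∈ distTriang _) (h1 : T.obj₁ ∈ S) (h3 : T.obj₃ ∈ S) : T.obj₂ ∈ S :=
  hS.cone_mem _ (inv_rot_of_distTriang _ hT) (hS.shift_mem (-1) h3) h1

lemma mem_obj₁ (hS : IsLocalizingSub.{u} S) (T : Triangle (DerivedCategory (ModuleCat.{u} R)))
    (hT : T ∈ distTriang _) (h2 : T.obj₂ ∈ S) (h3 : T.obj₃ ∈ S) : T.obj₁ ∈ S := by
  have h : T.obj₁⟦(1 : ℤ)⟧ ∈ S := hS.cone_mem _ (rot_of_distTriang _ hT) h2 h3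
  exact hS.mem_of_iso ((shiftFunctorCompIsoId (DerivedCategory (ModuleCat.{u} R)) (1 : ℤ) (-1)
    (by simp)).app T.obj₁) (hS.shift_mem (-1) h)

lemma single_mem (hS : IsLocalizingSub.{u} S) (M : ModuleCat.{u} R) (h : smod R M ∈ S) (n : ℤ) :
    Q.obj ((HomologicalComplex.single _ (ComplexShape.up ℤ) n).obj M) ∈ S := by
  change (singleFunctor _ n).obj M ∈ S
  have e := ((singleFunctors (ModuleCat.{u} R)).shiftIso (-n) n 0 (by simp)).app M
  exact hS.mem_of_iso e (hS.shift_mem (-n) h)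

lemma isColimit_mem (hS : IsLocalizingSub.{u} S) {ι : Type u}
    (K : ι → CochainComplex (ModuleCat.{u} R) ℤ) (h : ∀ i, Q.obj (K i) ∈ S) :
    Q.obj (dsum K) ∈ S := by
  classical
  exact hS.coprod_mem _ _ (isColimitQcofan K) h

lemma telescope (hS : IsLocalizingSub.{u} S) (C : ℕ → CochainComplex (ModuleCat.{u} R) ℤ)
    (K : CochainComplex (ModuleCat.{u} R) ℤ) (t : ∀ n, C n ⟶ C (n + 1)) (π : ∀ n, C n ⟶ K)
    (htπ : ∀ n, t n ≫ π (n + 1) = π n)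
    (hsurj : ∀ i (y : K.X i), ∃ n x, (π n).f i x = y)
    (hinj : ∀ n i (x : (C n).X i), (π n).f i x = 0 → (t n).f i x = 0)
    (h : ∀ n, Q.obj (C n) ∈ S) : Q.obj K ∈ S := by
  classical
  let C' : ULift.{u} ℕ → CochainComplex (ModuleCat.{u} R) ℤ := fun n => C n.down
  let g : dsum C' ⟶ K := ddesc C' (fun n => π n.down)
  let f : dsum C' ⟶ dsum C' :=
    ddesc C' (fun n => dinj C' n - (t n.down ≫ dinj C' ⟨n.down + 1⟩))
  have h0 : f ≫ g = 0 := by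
    ext i : 1
    refine dsum_X_ext C' _ _ fun n => ?_
    rw [← HomologicalComplex.comp_f, ← Category.assoc, dinj_ddesc, Preadditive.sub_comp,
      Category.assoc, dinj_ddesc, dinj_ddesc, htπ, sub_self]
    simp
  have fd : ∀ i n (x : (C' n).X i), f.f i (DFinsupp.single (β := fun n => (C' n).X i) n x) =
      DFinsupp.single (β := fun n => (C' n).X i) n x -
      DFinsupp.single (β := fun n => (C' n).X i) ⟨n.down + 1⟩ ((t n.down).f i x) := by
    intro i n x
    exact congr($(dinj_ddesc C' (fun n => dinj C' n - (t n.down ≫ dinj C' ⟨n.down + 1⟩)) n).f i x)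
  have fz : ∀ i (x : Π₀ n, (C' n).X i), (show Π₀ n, (C' n).X i from f.f i x) ⟨0⟩ = x ⟨0⟩ := by
    intro i x
    have : (DFinsupp.lapply (R := R) (M := fun n => (C' n).X i) ⟨0⟩) ∘ₗ (f.f i).hom =
        DFinsupp.lapply (R := R) (M := fun n => (C' n).X i) ⟨0⟩ := by
      refine DFinsupp.lhom_ext (M := fun n => (C' n).X i) fun n x => ?_
      refine (congrArg (fun z : Π₀ n, (C' n).X i => z ⟨0⟩) (fd i n x)).trans ?_
      simp only [DFinsupp.sub_apply]
      rw [DFinsupp.single_eq_of_ne (i := (⟨n.down + 1⟩ : ULift ℕ)), sub_zero]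
      · rfl
      · simp
    exact congr($this x)
  have fs : ∀ i (x : Π₀ n, (C' n).X i) (k : ℕ), (show Π₀ n, (C' n).X i from f.f i x) ⟨k+1⟩ =
      x ⟨k + 1⟩ - (t k).f i (x ⟨k⟩) := by
    intro i x k
    have : (DFinsupp.lapply (R := R) (M := fun n => (C' n).X i) ⟨k+1⟩) ∘ₗ (f.f i).hom =
        DFinsupp.lapply (R := R) (M := fun n => (C' n).X i) ⟨k+1⟩ -
        ((t k).f i).hom ∘ₗ DFinsupp.lapply (R := R) (M := fun n => (C' n).X i) ⟨k⟩ := by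
      refine DFinsupp.lhom_ext (M := fun n => (C' n).X i) fun n x => ?_
      refine (congrArg (fun z : Π₀ n, (C' n).X i => z ⟨k+1⟩) (fd i n x)).trans ?_
      change (DFinsupp.single (β := fun n => (C' n).X i) n x) ⟨k+1⟩ -
        (DFinsupp.single (β := fun n => (C' n).X i) ⟨n.down + 1⟩ ((t n.down).f i x)) ⟨k+1⟩ =
        (DFinsupp.single (β := fun n => (C' n).X i) n x) ⟨k+1⟩ -
        (t k).f i ((DFinsupp.single (β := fun n => (C' n).X i) n x) ⟨k⟩)
      congr 1
      obtain ⟨n⟩ := n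
      by_cases hn : n = k
      · subst hn
        rw [DFinsupp.single_eq_same, DFinsupp.single_eq_same]
      · rw [DFinsupp.single_eq_of_ne, DFinsupp.single_eq_of_ne, map_zero]
        · simpa using Ne.symm hn
        · simpa using Ne.symm hn
    exact congr($this x)
  have gs : ∀ i (x : Π₀ n, (C' n).X i) (N : ℕ), (∀ k, N ≤ k → x ⟨k⟩ = 0) →
      g.f i x = ∑ k ∈ Finset.range N, (π k).f i (x ⟨k⟩) := by
    intro i x N hx
    have hx' : x = ∑ k ∈ Finset.range N, DFinsupp.single (β := fun n => (C' n).X i) ⟨k⟩ (x ⟨k⟩) := by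
      refine DFinsupp.ext (β := fun n => (C' n).X i) ?_
      rintro ⟨k⟩
      rw [DFinsupp.finsetSum_apply]
      rw [Finset.sum_eq_single k]
      · rw [DFinsupp.single_eq_same]
      · intro l _ hl
        rw [DFinsupp.single_eq_of_ne]
        simpa using Ne.symm hl
      · intro hk
        rw [DFinsupp.single_eq_same]
        exact hx k (by simpa using hk)
    conv_lhs => rw [hx']
    refine (map_sum (g.f i).hom _ _).trans (Finset.sum_congr rfl fun k _ => ?_)
    exact congr($(dinj_ddesc C' (fun n => π n.down) ⟨k⟩).f i (x ⟨k⟩))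
  have hses := ses_of_elem f g ?_ ?_ h0 ?_
  · exact hS.cone_mem _ (triangleOfSES_distinguished hses) (isColimit_mem hS C' fun n => h _)
      (isColimit_mem hS C' fun n => h _)
  · intro i (x : Π₀ n, (C' n).X i) hx
    refine DFinsupp.ext (β := fun n => (C' n).X i) ?_
    rintro ⟨n⟩
    induction n with
    | zero => 
      rw [← fz, hx]
    | succ k ih =>
      have := fs i x k
      rw [hx, ih] at this
      have h2 : (0 : (C' ⟨k+1⟩).X i) = x ⟨k+1⟩ - (t k).f i 0 := this
      rw [map_zero, sub_zero] at h2
      exact h2.symm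
  · intro i y
    obtain ⟨n, x, rfl⟩ := hsurj i y
    exact ⟨(dinj C' ⟨n⟩).f i x, by
      rw [← ModuleCat.comp_apply, ← HomologicalComplex.comp_f, dinj_ddesc]⟩
  · intro i (y : Π₀ n, (C' n).X i) hy
    let s : ∀ k : ℕ, (C k).X i := fun k => Nat.rec (motive := fun k => (C k).X i) (y ⟨0⟩)
      (fun k z => y ⟨k+1⟩ + (t k).f i z) k
    have hs0 : s 0 = y ⟨0⟩ := rfl
    have hs1 : ∀ k, s (k+1) = y ⟨k+1⟩ + (t k).f i (s k) := fun k => rfl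
    have hπ : ∀ k, (π k).f i (s k) = ∑ l ∈ Finset.range (k+1), (π l).f i (y ⟨l⟩) := by
      intro k
      induction k with
      | zero => simp [hs0]
      | succ k ih =>
        rw [Finset.sum_range_succ, ← ih, hs1, map_add, add_comm]
        congr 1
        exact congr($(htπ k).f i (s k))
    obtain ⟨N, hN⟩ : ∃ N : ℕ, ∀ k, N ≤ k → y ⟨k⟩ = 0 := by
      refine ⟨(y.support.image ULift.down).sup id + 1, fun k hk => ?_⟩
      by_contra hne
      have : k ≤ (y.support.image ULift.down).sup id :=
        Finset.le_sup (f := id) (Finset.mem_image.2 ⟨⟨k⟩, by simpa using hne, rfl⟩)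
      omega
    have hsN : ∀ k, N + 1 ≤ k → s k = 0 := by
      intro k hk
      induction k, hk using Nat.le_induction with
      | base =>
        rw [hs1, hN _ (by omega), zero_add]
        apply hinj
        rw [hπ, ← gs i y (N+1) (fun k hk => hN k (by omega))]
        exact hy
      | succ k hk ih => rw [hs1, hN _ (by omega), zero_add, ih, map_zero]
    let x : Π₀ n, (C' n).X i := DFinsupp.mk
      ((Finset.range (N+1)).map ⟨ULift.up, ULift.up_injective⟩) (fun n => s n.1.down)
    have hx : ∀ k, x ⟨k⟩ = s k := by
      intro k
      by_cases hk : N + 1 ≤ k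
      · rw [hsN k hk]
        refine DFinsupp.mk_of_notMem ?_
        simpa using hk
      · refine (DFinsupp.mk_of_mem ?_).trans rfl
        simpa using hk
    refine ⟨x, DFinsupp.ext (β := fun n => (C' n).X i) ?_⟩
    rintro ⟨k⟩
    cases k with
    | zero => exact (fz i x).trans (hx 0)
    | succ k =>
      refine (fs i x k).trans ?_
      rw [hx, hx, hs1, add_sub_cancel_right]

end partC
end RadLoc

namespace RadLoc
section partD
open DerivedCategory
variable {R : Type u} [CommRing R]

/-- `dsum` is a coproduct of complexes. -/
noncomputable def isColimitDsum {ι : Type u} [DecidableEq ι]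
    (K : ι → CochainComplex (ModuleCat.{u} R) ℤ) :
    IsColimit (Cofan.mk (dsum K) (dinj K)) :=
  Cofan.IsColimit.mk _ (fun s => ddesc K s.inj) (fun s i => dinj_ddesc K s.inj i)
    (fun s m hm => by
      ext n : 1
      refine dsum_X_ext K _ _ fun i => ?_
      rw [← HomologicalComplex.comp_f, ← HomologicalComplex.comp_f, dinj_ddesc]
      exact congr($(hm i).f n))

/-- The stupid truncation. -/
def trSub (K : CochainComplex (ModuleCat.{u} R) ℤ) (n : ℕ) (i : ℤ) : Submodule R (K.X i) where
  carrier := {x | ¬ (-(n : ℤ) < i) → x = 0}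
  add_mem' ha hb h := by rw [ha h, hb h, add_zero]
  zero_mem' _ := rfl
  smul_mem' r x hx h := by rw [hx h, smul_zero]

lemma trSub_d (K : CochainComplex (ModuleCat.{u} R) ℤ) (n : ℕ) (i j : ℤ) :
    ∀ x ∈ trSub K n i, (K.d i j).hom x ∈ trSub K n j := by
  intro x hx h
  by_cases hij : (ComplexShape.up ℤ).Rel i j
  · have hij' : i + 1 = j := hij
    rw [hx (by omega), map_zero]
  · rw [K.shape i j hij]; rfl

/-- The stupid truncation. -/
noncomputable def tr (K : CochainComplex (ModuleCat.{u} R) ℤ) (n : ℕ) :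
    CochainComplex (ModuleCat.{u} R) ℤ where
  X i := ModuleCat.of R (trSub K n i)
  d i j := ModuleCat.ofHom ((K.d i j).hom.restrict (trSub_d K n i j))
  shape i j h := by
    refine ModuleCat.hom_ext (LinearMap.ext fun (x : trSub K n i) => Subtype.ext ?_)
    exact congr($(K.shape i j h).hom x.1)
  d_comp_d' i j k _ _ := by
    refine ModuleCat.hom_ext (LinearMap.ext fun (x : trSub K n i) => Subtype.ext ?_)
    exact congr($(K.d_comp_d i j k).hom x.1)

/-- Inclusion of the truncation. -/
noncomputable def trι (K : CochainComplex (ModuleCat.{u} R) ℤ) (n : ℕ) : tr K n ⟶ K where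
  f i := ModuleCat.ofHom (trSub K n i).subtype

lemma trSub_le (K : CochainComplex (ModuleCat.{u} R) ℤ) (n : ℕ) (i : ℤ) :
    trSub K n i ≤ trSub K (n+1) i := fun x hx h => hx (by push_cast at h; omega)

/-- Transition of the truncation. -/
noncomputable def trt (K : CochainComplex (ModuleCat.{u} R) ℤ) (n : ℕ) :
    tr K n ⟶ tr K (n+1) where
  f i := ModuleCat.ofHom (Submodule.inclusion (trSub_le K n i))

/-- Projection to the last component. -/
noncomputable def trp (K : CochainComplex (ModuleCat.{u} R) ℤ) (n : ℕ) :
    tr K (n+1) ⟶ (HomologicalComplex.single _ (ComplexShape.up ℤ) (-(n:ℤ))).obj (K.X (-n)) :=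
  HomologicalComplex.mkHomToSingle ((trι K (n+1)).f (-n)) (by
    intro i hi
    have hi' : i + 1 = -n := hi
    refine ModuleCat.hom_ext (LinearMap.ext fun (x : trSub K (n+1) i) => ?_)
    have : x = 0 := Subtype.ext (x.2 (by push_cast; omega))
    rw [this]
    exact (map_zero (ModuleCat.Hom.hom _)).trans (map_zero (ModuleCat.Hom.hom _)).symm)

lemma tr_ses (K : CochainComplex (ModuleCat.{u} R) ℤ) (n : ℕ) : ∃ h0 : trt K n ≫ trp K n = 0,
    (ShortComplex.mk (trt K n) (trp K n) h0).ShortExact := by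
  have hp : (trp K n).f (-n) = (trι K (n+1)).f (-n) ≫
    (HomologicalComplex.singleObjXSelf (ComplexShape.up ℤ) (-(n:ℤ)) (K.X (-n))).inv :=
    HomologicalComplex.mkHomToSingle_f _ _
  refine ⟨?_, ses_of_elem _ _ ?_ ?_ _ ?_⟩
  · apply HomologicalComplex.to_single_hom_ext
    rw [HomologicalComplex.comp_f, hp, ← Category.assoc]
    have : (trt K n).f (-n) ≫ (trι K (n+1)).f (-n) = 0 := ?_
    · rw [this, zero_comp]; rfl
    refine ModuleCat.hom_ext (LinearMap.ext fun (x : trSub K n (-n)) => ?_)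
    exact x.2 (by omega)
  · intro i (x : trSub K n i) hx
    exact Subtype.ext congr(($hx : trSub K (n+1) i).1)
  · intro i
    by_cases h : i = -n
    · subst h
      rw [hp]
      intro y
      refine ⟨(⟨(HomologicalComplex.singleObjXSelf (ComplexShape.up ℤ) (-(n:ℤ)) (K.X (-n))).hom y,
        fun h => by push_cast at h; omega⟩ : trSub K (n+1) (-n)), ?_⟩
      exact congr($((HomologicalComplex.singleObjXSelf (ComplexShape.up ℤ)
        (-(n:ℤ)) (K.X (-n))).hom_inv_id).hom y)
    · have := ModuleCat.subsingleton_of_isZero (HomologicalComplex.isZero_single_obj_X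
        (ComplexShape.up ℤ) (-(n:ℤ)) (K.X (-n)) i h)
      intro y
      exact ⟨0, Subsingleton.elim _ _⟩
  · intro i (y : trSub K (n+1) i) hy
    refine ⟨(⟨y.1, fun h => ?_⟩ : trSub K n i), rfl⟩
    by_cases hi : i = -n
    · subst hi
      rw [hp] at hy
      have hy' : (HomologicalComplex.singleObjXSelf (ComplexShape.up ℤ)
        (-(n:ℤ)) (K.X (-n))).inv y.1 = 0 := hy
      have := congr($((HomologicalComplex.singleObjXSelf (ComplexShape.up ℤ)
        (-(n:ℤ)) (K.X (-n))).inv_hom_id).hom y.1)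
      refine this.symm.trans ?_
      rw [ModuleCat.hom_comp, LinearMap.comp_apply]
      erw [hy']
      exact map_zero _
    · exact y.2 (by push_cast; omega)

variable [HasDerivedCategory.{w'} (ModuleCat.{u} R)]
variable {S : Set (DerivedCategory (ModuleCat.{u} R))}

lemma smod_mem_iso (hS : IsLocalizingSub.{u} S) {M N : ModuleCat.{u} R} (e : M ≅ N)
    (h : smod R M ∈ S) : smod R N ∈ S :=
  hS.mem_of_iso ((singleFunctor _ 0).mapIso e) h

lemma smod_coprod_mem (hS : IsLocalizingSub.{u} S) {ι : Type u} (A : ι → ModuleCat.{u} R)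
    (c : Cofan A) (hc : IsColimit c) (h : ∀ i, smod R (A i) ∈ S) : smod R c.pt ∈ S := by
  classical
  let F := HomologicalComplex.single (ModuleCat.{u} R) (ComplexShape.up ℤ) 0
  let K : ι → CochainComplex (ModuleCat.{u} R) ℤ := fun i => F.obj (A i)
  have e : F.obj c.pt ≅ dsum K :=
    (isColimitCofanMkObjOfIsColimit F A c.inj
      (IsColimit.ofIsoColimit hc (Cofan.ext (Iso.refl _) (fun i => by simp)))).coconePointUniqueUpToIso
      (isColimitDsum K)
  exact hS.mem_of_iso (Q.mapIso e.symm) (isColimit_mem hS K h)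

lemma smod_finsupp_mem (hS : IsLocalizingSub.{u} S) (ι : Type u) (A : ModuleCat.{u} R)
    (h : smod R A ∈ S) : smod R (ModuleCat.of R (ι →₀ A)) ∈ S := by
  classical
  refine smod_coprod_mem hS (fun _ : ι => A)
    (Cofan.mk (ModuleCat.of R (ι →₀ A)) (fun i => ModuleCat.ofHom (Finsupp.lsingle i)))
    (Cofan.IsColimit.mk _ (fun s => ModuleCat.ofHom (Finsupp.lsum ℕ (fun i => (s.inj i).hom)))
      ?_ ?_) (fun _ => h)
  · intro s i
    ext x
    exact Finsupp.lsum_single (R := R) ℕ (fun i => (s.inj i).hom) i x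
  · intro s m hm
    refine ModuleCat.hom_ext (Finsupp.lhom_ext fun i x => ?_)
    refine Eq.trans ?_ (Finsupp.lsum_single (R := R) ℕ (fun i => (s.inj i).hom) i x).symm
    exact congr($(hm i).hom x)

lemma retract_mem (hS : IsLocalizingSub.{u} S) {P F : ModuleCat.{u} R} (i : P ⟶ F) (r : F ⟶ P)
    (hir : i ≫ r = 𝟙 P) (h : smod R F ∈ S) : smod R P ∈ S := by
  let G := HomologicalComplex.single (ModuleCat.{u} R) (ComplexShape.up ℤ) 0
  refine telescope hS (fun _ => G.obj F) (G.obj P) (fun _ => G.map (r ≫ i)) (fun _ => G.map r)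
    ?_ ?_ ?_ (fun _ => h)
  · intro n
    rw [← G.map_comp, Category.assoc, hir, Category.comp_id]
  · intro j y
    refine ⟨0, (G.map i).f j y, ?_⟩
    have : G.map i ≫ G.map r = 𝟙 _ := by rw [← G.map_comp, hir, G.map_id]
    exact congr(($this).f j y)
  · intro _ j x hx
    rw [G.map_comp, HomologicalComplex.comp_f, ModuleCat.comp_apply, hx, map_zero]

lemma bounded_mem (hS : IsLocalizingSub.{u} S) (K : CochainComplex (ModuleCat.{u} R) ℤ)
    (hK : ∀ i : ℤ, 0 < i → IsZero (K.X i)) (h : ∀ i, smod R (K.X i) ∈ S) : Q.obj K ∈ S := by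
  refine telescope hS (tr K) K (trt K) (trι K) (fun n => rfl) ?_ ?_ ?_
  · intro i y
    exact ⟨(-i).toNat + 1, (⟨y, fun h => absurd (by omega) h⟩ : trSub K _ i), rfl⟩
  · intro n i (x : trSub K n i) hx
    have : x = 0 := Subtype.ext hx
    rw [this]; exact map_zero _
  · intro n
    induction n with
    | zero =>
      have hz : IsZero (tr K 0) := by
        rw [IsZero.iff_id_eq_zero]
        ext i x
        refine Subtype.ext (?_ : x.1 = 0)
        by_cases hi : 0 < i
        · have := ModuleCat.subsingleton_of_isZero (hK i hi)
          exact Subsingleton.elim _ _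
        · exact x.2 (by simpa using hi)
      exact hS.mem_of_iso ((Q.map_isZero hz).iso (isZero_zero _)).symm hS.zero_mem
    | succ n ih =>
      obtain ⟨h0, hs⟩ := tr_ses K n
      exact mem_obj₂ hS _ (triangleOfSES_distinguished hs) ih (single_mem hS _ (h _) _)

end partD
end RadLoc

namespace RadLoc
section partE
open DerivedCategory
variable {R : Type u} [CommRing R] [HasDerivedCategory.{w'} (ModuleCat.{u} R)]
variable {S : Set (DerivedCategory (ModuleCat.{u} R))}

lemma proj_mem (hS : IsLocalizingSub.{u} S) (I : Ideal R)
    (hI : smod R (ModuleCat.of R (R ⧸ I)) ∈ S) (P : ModuleCat.{u} (R ⧸ I)) (hP : Projective P) :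
    smod R ((ModuleCat.restrictScalars (Ideal.Quotient.mk I)).obj P) ∈ S := by
  have hP' : Module.Projective (R ⧸ I) P := P.projective_of_module_projective
  obtain ⟨s, hs⟩ := Module.projective_def'.1 hP'
  let F := ModuleCat.restrictScalars (Ideal.Quotient.mk I)
  let L : ModuleCat.{u} (R ⧸ I) := ModuleCat.of (R ⧸ I) (P →₀ (R ⧸ I))
  let i : P ⟶ L := ModuleCat.ofHom s
  let r : L ⟶ P := ModuleCat.ofHom (Finsupp.linearCombination (R ⧸ I) id)
  have hir : i ≫ r = 𝟙 P := ModuleCat.hom_ext hs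
  refine retract_mem hS (F.map i) (F.map r) (by rw [← F.map_comp, hir, F.map_id]) ?_
  have h1 := smod_finsupp_mem hS P _ hI
  let e : (P →₀ (R ⧸ I)) ≃ₗ[R] F.obj L :=
    { AddEquiv.refl (P →₀ (R ⧸ I)) with
      map_smul' := fun r x => by
        refine Finsupp.ext fun p => ?_
        change r • x p = Ideal.Quotient.mk I r * x p
        rw [Algebra.smul_def]; rfl }
  exact smod_mem_iso hS e.toModuleIso h1

lemma restrict_mem (hS : IsLocalizingSub.{u} S) (I : Ideal R)
    (hI : smod R (ModuleCat.of R (R ⧸ I)) ∈ S) (M : ModuleCat.{u} (R ⧸ I)) :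
    smod R ((ModuleCat.restrictScalars (Ideal.Quotient.mk I)).obj M) ∈ S := by
  let F := ModuleCat.restrictScalars.{u} (Ideal.Quotient.mk I)
  let P := ProjectiveResolution.of M
  let K := (F.mapHomologicalComplex (ComplexShape.up ℤ)).obj P.cochainComplex
  have hK : Q.obj K ∈ S := by
    refine bounded_mem hS K (fun i hi => ?_) (fun i => ?_)
    · exact F.map_isZero (P.cochainComplex.isZero_of_isStrictlyLE 0 i hi)
    · exact proj_mem hS I hI _ inferInstance
  let f := (F.mapHomologicalComplex (ComplexShape.up ℤ)).map P.π'
  have hf : QuasiIso f := by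
    dsimp only [f]
    infer_instance
  have e1 : Q.obj K ≅ _ := @asIso _ _ _ _ (Q.map f) ((isIso_Q_map_iff_quasiIso _ f).2 hf)
  have e2 := (HomologicalComplex.singleMapHomologicalComplex F (ComplexShape.up ℤ) 0).app M
  exact hS.mem_of_iso (e1 ≪≫ Q.mapIso e2) hK

lemma torsion_mem (hS : IsLocalizingSub.{u} S) (I : Ideal R)
    (hI : smod R (ModuleCat.of R (R ⧸ I)) ∈ S) (M : Type u) [AddCommGroup M] [Module R M]
    (hM : Module.IsTorsionBySet R M I) : smod R (ModuleCat.of R M) ∈ S := by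
  let _ := hM.module
  have h := restrict_mem hS I hI (ModuleCat.of (R ⧸ I) M)
  let e : (ModuleCat.restrictScalars (Ideal.Quotient.mk I)).obj (ModuleCat.of (R ⧸ I) M)
      ≃ₗ[R] M := { AddEquiv.refl M with map_smul' := fun r x => rfl }
  exact smod_mem_iso hS e.toModuleIso h

lemma pow_torsion_mem (hS : IsLocalizingSub.{u} S) (I : Ideal R)
    (hI : smod R (ModuleCat.of R (R ⧸ I)) ∈ S) (n : ℕ) : ∀ (M : Type u) [AddCommGroup M]
    [Module R M], (I ^ n • (⊤ : Submodule R M) = ⊥) → smod R (ModuleCat.of R M) ∈ S := by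
  induction n with
  | zero =>
    intro M _ _ hM
    apply torsion_mem hS I hI
    intro x a
    have : x ∈ (⊥ : Submodule R M) := by rw [← hM]; simp
    rw [(Submodule.mem_bot R).1 this, smul_zero]
  | succ n ih =>
    intro M _ _ hM
    let N : Submodule R M := I • ⊤
    have h1 : smod R (ModuleCat.of R N) ∈ S := by
      apply ih
      apply Submodule.map_injective_of_injective N.subtype_injective
      rw [Submodule.map_smul'', Submodule.map_top, Submodule.range_subtype, Submodule.map_bot,
        ← hM, pow_succ, Submodule.mul_smul]
    have h3 : smod R (ModuleCat.of R (M ⧸ N)) ∈ S := by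
      apply torsion_mem hS I hI
      rintro x ⟨r, hr⟩
      obtain ⟨x, rfl⟩ := Submodule.Quotient.mk_surjective _ x
      change r • _ = _
      rw [← Submodule.Quotient.mk_smul, Submodule.Quotient.mk_eq_zero]
      exact Submodule.smul_mem_smul hr trivial
    let T : ShortComplex (ModuleCat.{u} R) :=
      ShortComplex.mk (ModuleCat.ofHom N.subtype) (ModuleCat.ofHom N.mkQ)
        (ModuleCat.hom_ext (by ext x; simp))
    have hT : T.ShortExact := by
      refine ShortComplex.ShortExact.mk' ?_ ?_ ?_
      · rw [ShortComplex.ShortExact.moduleCat_exact_iff_function_exact]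
        exact LinearMap.exact_subtype_mkQ N
      · exact (ModuleCat.mono_iff_injective _).2 N.subtype_injective
      · exact (ModuleCat.epi_iff_surjective _).2 N.mkQ_surjective
    exact mem_obj₂ hS _ hT.singleTriangle_distinguished h1 h3

lemma mem_loc_of_le (I J : Ideal R) (hI : I.FG) (h : I.radical ≤ J.radical) :
    smod R (ModuleCat.of R (R ⧸ J)) ∈ Loc.{u} {smod R (ModuleCat.of R (R ⧸ I))} := by
  rintro S ⟨hS, hSI⟩
  obtain ⟨n, hn⟩ := Ideal.exists_pow_le_of_le_radical_of_fg (Ideal.le_radical.trans h) hI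
  refine pow_torsion_mem hS I (hSI rfl) n _ ?_
  rw [eq_bot_iff, Submodule.smul_le]
  intro r hr x _
  obtain ⟨x, rfl⟩ := Ideal.Quotient.mk_surjective x
  rw [Submodule.mem_bot, ← Ideal.Quotient.mk_eq_mk, ← Submodule.Quotient.mk_smul,
    Submodule.Quotient.mk_eq_zero]
  exact J.mul_mem_right _ (hn hr)

lemma main_iff (I J : Ideal R) (hI : I.FG) :
    I.radical ≤ J.radical ↔
      Loc.{u} {smod R (ModuleCat.of R (R ⧸ J))} ⊆
        Loc.{u} {smod R (ModuleCat.of R (R ⧸ I))} := by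
  constructor
  · intro h X hX S hS
    refine hX S ⟨hS.1, ?_⟩
    rintro _ rfl
    exact mem_loc_of_le I J hI h S hS
  · intro h
    exact Ideal.radical_le_radical_iff.2 (le_radical_of_mem I J (h (fun S hS => hS.2 rfl)))

end partE
end RadLoc

/-- Theorem: for finitely generated ideals `I`, `J` of `R`, one has
`√I ⊆ √J ↔ Loc(R/J) ⊆ Loc(R/I)`, and consequently
`√I = √J ↔ Loc(R/I) = Loc(R/J)`. -/
theorem radical_le_iff_loc_subset (R : Type u) [CommRing R]
    [HasDerivedCategory.{w'} (ModuleCat.{u} R)]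
    (I J : Ideal R) (hI : I.FG) (hJ : J.FG) :
    (I.radical ≤ J.radical ↔
      Loc.{u} {smod R (ModuleCat.of R (R ⧸ J))} ⊆
        Loc.{u} {smod R (ModuleCat.of R (R ⧸ I))}) ∧
    (I.radical = J.radical ↔
      Loc.{u} {smod R (ModuleCat.of R (R ⧸ I))} =
        Loc.{u} {smod R (ModuleCat.of R (R ⧸ J))}) := by
  refine ⟨RadLoc.main_iff I J hI, ?_⟩
  rw [le_antisymm_iff, RadLoc.main_iff I J hI, RadLoc.main_iff J I hJ, and_comm]
  exact (Set.Subset.antisymm_iff (a := Loc.{u} {smod R (ModuleCat.of R (R ⧸ I))})).symm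
end

section
/- Let R be a commutative ring and let C be a chain complex of R-modules whose total homology H_*(C) is a finitely generated R-module. Then there exist finitely many ideals J_1, …, J_m of R such that Loc(C) = Loc(R/J_1, …, R/J_m) in D(R). -/
open CategoryTheory CategoryTheory.Limits CategoryTheory.Pretriangulated ZeroObject

universe w w' v u

section PartA
variable {T : Type u} [Category.{v} T] [Preadditive T] [HasZeroObject T]
  [HasShift T ℤ] [∀ n : ℤ, (shiftFunctor T n).Additive] [Pretriangulated T]

lemma isLocalizingSub_Loc (S : Set T) : IsLocalizingSub.{w} (Loc.{w} S) where
  zero_mem := fun L hL => hL.1.zero_mem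
  mem_of_iso := fun e hx L hL => hL.1.mem_of_iso e (hx L hL)
  shift_mem := fun n x hx L hL => hL.1.shift_mem n (hx L hL)
  cone_mem := fun Tr hT h1 h2 L hL => hL.1.cone_mem Tr hT (h1 L hL) (h2 L hL)
  coprod_mem := fun f c hc h L hL => hL.1.coprod_mem f c hc (fun i => h i L hL)

lemma subset_Loc (S : Set T) : S ⊆ Loc.{w} S := fun _ hx _ hL => hL.2 hx

lemma Loc_subset {S L : Set T} (hL : IsLocalizingSub.{w} L) (h : S ⊆ L) : Loc.{w} S ⊆ L :=
  fun _ hx => hx L ⟨hL, h⟩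

/-- membership in a localizing subcategory as an object property -/
def locProp (L : Set T) : ObjectProperty T := fun x => x ∈ L

variable {L : Set T}

lemma IsLocalizingSub.closedIso (hL : IsLocalizingSub.{w} L) : (locProp L).IsClosedUnderIsomorphisms where
  of_iso e h := hL.mem_of_iso e h

lemma IsLocalizingSub.containsZero (hL : IsLocalizingSub.{w} L) : (locProp L).ContainsZero where
  exists_zero := ⟨0, isZero_zero _, hL.zero_mem⟩

lemma IsLocalizingSub.stableShift (hL : IsLocalizingSub.{w} L) : (locProp L).IsStableUnderShift ℤ where
  isStableUnderShiftBy n := { le_shift := fun _ hx => hL.shift_mem n hx }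

lemma IsLocalizingSub.mem₁ (hL : IsLocalizingSub.{w} L) (Tr : Triangle T) (hT : Tr ∈ distinguishedTriangles)
    (h2 : Tr.obj₂ ∈ L) (h3 : Tr.obj₃ ∈ L) : Tr.obj₁ ∈ L := by
  have := hL.cone_mem _ (rot_of_distTriang _ hT) h2 h3
  exact hL.mem_of_iso ((shiftEquiv T (1 : ℤ)).unitIso.app _).symm (hL.shift_mem (-1) this)

lemma IsLocalizingSub.mem₂ (hL : IsLocalizingSub.{w} L) (Tr : Triangle T) (hT : Tr ∈ distinguishedTriangles)
    (h1 : Tr.obj₁ ∈ L) (h3 : Tr.obj₃ ∈ L) : Tr.obj₂ ∈ L :=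
  IsLocalizingSub.mem₁ hL _ (rot_of_distTriang _ hT) h3 (hL.shift_mem 1 h1)

lemma IsLocalizingSub.isTriangulated (hL : IsLocalizingSub.{w} L) : (locProp L).IsTriangulated := by
  have := hL.closedIso
  have := hL.containsZero
  have := hL.stableShift
  have : (locProp L).IsTriangulatedClosed₂ := .mk' (fun T hT h1 h3 => hL.mem₂ T hT h1 h3)
  constructor

lemma IsLocalizingSub.coprodNat_mem (hL : IsLocalizingSub.{w} L) (f : ℕ → T) (c : Cofan f) (hc : IsColimit c)
    (h : ∀ i, f i ∈ L) : c.pt ∈ L := by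
  let e : ULift.{w} ℕ ≃ ℕ := Equiv.ulift
  exact hL.coprod_mem (fun i => f (e i)) (Cofan.mk c.pt fun i => c.inj (e i))
    (Cofan.IsColimit.mk _ (fun s => Cofan.IsColimit.desc hc fun i => s.inj (e.symm i))
      (fun s i => by simp [e, Equiv.ulift]) (fun s m hm => by
        apply Cofan.IsColimit.hom_ext hc
        intro i
        exact (hm (e.symm i)).trans (Cofan.IsColimit.fac hc (fun i => s.inj (e.symm i)) i).symm)) (fun i => h _)

/-- closure under retracts -/
lemma IsLocalizingSub.retract_mem (hL : IsLocalizingSub.{w} L) {X Y : T} (s : X ⟶ Y) (r : Y ⟶ X) (hsr : s ≫ r = 𝟙 X)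
    (c : Cofan (fun _ : ℕ => Y)) (hc : IsColimit c) (hY : Y ∈ L) : X ∈ L := by
  have hB : c.pt ∈ L := hL.coprodNat_mem _ c hc (fun _ => hY)
  obtain ⟨e, he0⟩ : ∃ e : Y ⟶ Y, e = r ≫ s := ⟨_, rfl⟩
  have he : e ≫ e = e := by simp [he0, reassoc_of% hsr]
  let σ : c.pt ⟶ c.pt := Cofan.IsColimit.desc hc fun k => e ≫ c.inj (k+1) + (𝟙 Y - e) ≫ c.inj k
  let ρ : c.pt ⟶ c.pt := Cofan.IsColimit.desc hc fun k =>
    match k with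
    | 0 => (𝟙 Y - e) ≫ c.inj 0
    | k+1 => e ≫ c.inj k + (𝟙 Y - e) ≫ c.inj (k+1)
  let p : c.pt ⟶ X := Cofan.IsColimit.desc hc fun k =>
    match k with
    | 0 => r
    | k+1 => 0
  have hσ : ∀ k, c.inj k ≫ σ = e ≫ c.inj (k+1) + (𝟙 Y - e) ≫ c.inj k := fun k => by simp [σ]
  have hρ0 : c.inj 0 ≫ ρ = (𝟙 Y - e) ≫ c.inj 0 := by simp [ρ]
  have hρ : ∀ k, c.inj (k+1) ≫ ρ = e ≫ c.inj k + (𝟙 Y - e) ≫ c.inj (k+1) := fun k => by simp [ρ]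
  have hp0 : c.inj 0 ≫ p = r := by simp [p]
  have hp : ∀ k, c.inj (k+1) ≫ p = 0 := fun k => by simp [p]
  have her : e ≫ r = r := by simp [he0, hsr]
  have hse : s ≫ e = s := by simp [he0, reassoc_of% hsr]
  have h1 : σ ≫ ρ = 𝟙 _ := by
    apply Cofan.IsColimit.hom_ext hc
    intro k
    rw [reassoc_of% hσ, Preadditive.add_comp, Category.assoc, Category.assoc, hρ]
    cases k with
    | zero =>
      rw [hρ0]
      simp only [Preadditive.comp_add, Preadditive.sub_comp, Preadditive.comp_sub, reassoc_of% he, Category.id_comp]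
      simp
    | succ k =>
      rw [hρ]
      simp only [Preadditive.comp_add, Preadditive.sub_comp, Preadditive.comp_sub, reassoc_of% he, Category.id_comp]
      simp
  have h2 : σ ≫ p = 0 := by
    apply Cofan.IsColimit.hom_ext hc
    intro k
    rw [reassoc_of% hσ, Preadditive.add_comp, Category.assoc, Category.assoc, hp]
    cases k with
    | zero => simp [hp0, her]
    | succ k => simp [hp]
  have h3 : ρ ≫ σ + p ≫ s ≫ c.inj 0 = 𝟙 _ := by
    apply Cofan.IsColimit.hom_ext hc
    intro k
    cases k with
    | zero =>
      rw [Preadditive.comp_add, reassoc_of% hρ0, reassoc_of% hp0, hσ]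
      simp only [Preadditive.comp_add, Preadditive.sub_comp, Preadditive.comp_sub, reassoc_of% he, Category.id_comp]
      simp [he0]
    | succ k =>
      rw [Preadditive.comp_add, reassoc_of% hρ, reassoc_of% hp, Preadditive.add_comp, Category.assoc, Category.assoc, hσ, hσ]
      simp only [Preadditive.comp_add, Preadditive.sub_comp, Preadditive.comp_sub, reassoc_of% he, Category.id_comp]
      simp
  obtain ⟨Z, g, h, hT⟩ := distinguished_cocone_triangle σ
  have hZ : Z ∈ L := hL.cone_mem _ hT hB hB
  obtain ⟨p', hp'⟩ : ∃ p' : Z ⟶ X, p = g ≫ p' := Triangle.yoneda_exact₂ _ hT p h2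
  have hσg : σ ≫ g = 0 := comp_distTriang_mor_zero₁₂ _ hT
  have hmono : Mono σ := mono_of_mono_fac h1
  have : Epi g := (Triangle.epi₂ _ hT ((Triangle.mor₃_eq_zero_iff_mono₁ _ hT).2 hmono))
  refine hL.mem_of_iso (x := Z) ⟨p', s ≫ c.inj 0 ≫ g, ?_, ?_⟩ hZ
  · rw [← cancel_epi g, ← reassoc_of% hp', Category.comp_id]
    have := congr($h3 ≫ g)
    simpa [hσg] using this
  · simp only [Category.assoc, ← hp', hp0, hsr]

end PartA

section PartA2
variable {T : Type u} [Category.{v} T] [Preadditive T] [HasZeroObject T]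
  [HasShift T ℤ] [∀ n : ℤ, (shiftFunctor T n).Additive] [Pretriangulated T]
open CategoryTheory.Pretriangulated.Opposite Opposite

/-- the cofan obtained from a product in the opposite category -/
noncomputable def unopCofanIsColimit (Z : ℕ → T) [HasProduct (fun k => op (Z k))] :
    IsColimit (Cofan.mk (f := Z) (unop (∏ᶜ fun k => op (Z k)))
      fun k => (Pi.π (fun k => op (Z k)) k).unop) :=
  Cofan.IsColimit.mk _ (fun s => (Pi.lift (fun k => (s.inj k).op)).unop)
        (fun s j => Quiver.Hom.op_inj (by simp)) (fun s m hm => Quiver.Hom.op_inj (by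
          apply Pi.hom_ext
          intro j
          simp [← hm]))

/-- coproducts of morphisms with cones in `L` -/
lemma IsLocalizingSub.trW_coprod {L : Set T} (hL : IsLocalizingSub.{w} L)
    [HasCoproductsOfShape ℕ T]
    (X Y : ℕ → T) (f : ∀ k, X k ⟶ Y k) (hf : ∀ k, (locProp L).trW (f k))
    (cX : Cofan X) (hX : IsColimit cX) (cY : Cofan Y) (hY : IsColimit cY)
    (α : cX.pt ⟶ cY.pt) (hα : ∀ k, cX.inj k ≫ α = f k ≫ cY.inj k) :
    (locProp L).trW α := by
  choose Z g h hT hZ using hf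
  let T' : ℕ → Triangle Tᵒᵖ := fun k =>
    (triangleOpEquivalence T).functor.obj (op (Triangle.mk (f k) (g k) (h k)))
  have hT' : ∀ k, T' k ∈ distTriang Tᵒᵖ := fun k => op_distinguished _ (hT k)
  have : HasProductsOfShape ℕ Tᵒᵖ := inferInstance
  have hP := unop_distinguished _ (productTriangle_distinguished T' hT')
  have hZ' := hL.coprodNat_mem Z _ (unopCofanIsColimit Z) hZ
  have h1 := (ObjectProperty.trW.mk (locProp L) hP hZ' :)
  let eX := hX.coconePointUniqueUpToIso (unopCofanIsColimit X)
  let eY := hY.coconePointUniqueUpToIso (unopCofanIsColimit Y)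
  refine (MorphismProperty.arrow_mk_iso_iff (locProp L).trW (Arrow.isoMk eX eY ?_)).2 h1
  apply Cofan.IsColimit.hom_ext hX
  intro k
  have e1 : cX.inj k ≫ eX.hom = (Pi.π (fun k => op (X k)) k).unop :=
    IsColimit.comp_coconePointUniqueUpToIso_hom hX _ ⟨k⟩
  have e2 : cY.inj k ≫ eY.hom = (Pi.π (fun k => op (Y k)) k).unop :=
    IsColimit.comp_coconePointUniqueUpToIso_hom hY _ ⟨k⟩
  dsimp
  rw [reassoc_of% hα, e2]
  rw [reassoc_of% e1]
  apply Quiver.Hom.op_inj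
  exact Limits.Pi.map_π (fun k => (T' k).mor₂) k

lemma IsLocalizingSub.trW_of_postcomp [IsTriangulated T] {L : Set T}
    (hL : IsLocalizingSub.{w} L) {X Y Z : T}
    (f : X ⟶ Y) (g : Y ⟶ Z) (h1 : (locProp L).trW g) (h2 : (locProp L).trW (f ≫ g)) :
    (locProp L).trW f := by
  obtain ⟨A, a, b, hA⟩ := distinguished_cocone_triangle f
  obtain ⟨B, c, d, hB, hBL⟩ := h1
  obtain ⟨C, e, k, hC, hCL⟩ := h2
  exact ⟨A, a, b, hA, hL.mem₁ _ (Triangulated.someOctahedron rfl hA hB hC).mem hCL hBL⟩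

end PartA2

section PartB1
variable {R : Type u} [CommRing R]

lemma complex_sum_f {ι : Type*} {K K' : CochainComplex (ModuleCat.{u} R) ℤ} (n : ℤ)
    (s : Finset ι) (f : ι → (K ⟶ K')) : (∑ i ∈ s, f i).f n = ∑ i ∈ s, (f i).f n :=
  (HomologicalComplex.eval (ModuleCat.{u} R) _ n).map_sum f s

lemma complex_sum_homologyMap {ι : Type*} {K K' : CochainComplex (ModuleCat.{u} R) ℤ} (n : ℤ)
    (s : Finset ι) (f : ι → (K ⟶ K')) : HomologicalComplex.homologyMap (∑ i ∈ s, f i) n =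
      ∑ i ∈ s, HomologicalComplex.homologyMap (f i) n :=
  (HomologicalComplex.homologyFunctor (ModuleCat.{u} R) _ n).map_sum f s

open Classical in
/-- the projection from a coproduct of complexes -/
noncomputable def sigmaProj {ι : Type u} (K : ι → CochainComplex (ModuleCat.{u} R) ℤ) (i : ι) :
    (∐ K) ⟶ K i :=
  Sigma.desc fun j => if h : j = i then eqToHom (by rw [h]) else 0

lemma ι_sigmaProj_self {ι : Type u} (K : ι → CochainComplex (ModuleCat.{u} R) ℤ) (i : ι) :
    Sigma.ι K i ≫ sigmaProj K i = 𝟙 _ := by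
  simp [sigmaProj]

lemma ι_sigmaProj_ne {ι : Type u} (K : ι → CochainComplex (ModuleCat.{u} R) ℤ) {i j : ι}
    (h : j ≠ i) : Sigma.ι K j ≫ sigmaProj K i = 0 := by
  simp [sigmaProj, h]

lemma ι_sigmaProj_self_assoc {ι : Type u} (K : ι → CochainComplex (ModuleCat.{u} R) ℤ) (i : ι)
    {Z : CochainComplex (ModuleCat.{u} R) ℤ} (h : K i ⟶ Z) :
    Sigma.ι K i ≫ sigmaProj K i ≫ h = h := by
  rw [← Category.assoc, ι_sigmaProj_self, Category.id_comp]

lemma ι_sigmaProj_ne_assoc {ι : Type u} (K : ι → CochainComplex (ModuleCat.{u} R) ℤ) {i j : ι}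
    (h : j ≠ i) {Z : CochainComplex (ModuleCat.{u} R) ℤ} (f : K i ⟶ Z) :
    Sigma.ι K j ≫ sigmaProj K i ≫ f = 0 ≫ f := by
  rw [← Category.assoc, ι_sigmaProj_ne K h]

lemma sigma_span {ι : Type u} (K : ι → CochainComplex (ModuleCat.{u} R) ℤ) (n : ℤ) :
    (⨆ i, LinearMap.range ((Sigma.ι K i).f n).hom) = ⊤ := by
  have hc : IsColimit (Cofan.mk (f := fun i => (K i).X n) ((∐ K).X n) fun i => (Sigma.ι K i).f n) :=
    isColimitCofanMkObjOfIsColimit (HomologicalComplex.eval _ _ n) K (Sigma.ι K)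
      (coproductIsCoproduct K)
  set S := (⨆ i, LinearMap.range ((Sigma.ι K i).f n).hom) with hS
  have : ModuleCat.ofHom S.mkQ = 0 := by
    apply Cofan.IsColimit.hom_ext hc
    intro i
    ext x
    have : ((Sigma.ι K i).f n).hom x ∈ S := le_iSup (fun i => LinearMap.range ((Sigma.ι K i).f n).hom) i ⟨x, rfl⟩
    simpa using this
  rw [← S.ker_mkQ]
  rw [LinearMap.ker_eq_top]
  simpa using congr(($this).hom)

lemma sigma_elem {ι : Type u} (K : ι → CochainComplex (ModuleCat.{u} R) ℤ) (n : ℤ)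
    (x : (∐ K).X n) : ∃ s : Finset ι,
      ((∑ i ∈ s, sigmaProj K i ≫ Sigma.ι K i : (∐ K) ⟶ (∐ K)).f n).hom x = x := by
  classical
  suffices ∃ s : Finset ι, ∀ t : Finset ι, s ⊆ t →
      ∑ i ∈ t, ((sigmaProj K i ≫ Sigma.ι K i).f n).hom x = x by
    obtain ⟨s, hs⟩ := this
    refine ⟨s, ?_⟩
    conv_rhs => rw [← hs s subset_rfl]
    rw [complex_sum_f, ModuleCat.hom_sum, LinearMap.sum_apply]
  have hx : x ∈ (⨆ i, LinearMap.range ((Sigma.ι K i).f n).hom) := by rw [sigma_span]; trivial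
  induction hx using Submodule.iSup_induction' with
  | mem i x hx =>
    obtain ⟨y, rfl⟩ := hx
    refine ⟨{i}, fun t ht => ?_⟩
    have h1 : ∀ j, ((sigmaProj K j ≫ Sigma.ι K j).f n).hom (((Sigma.ι K i).f n).hom y) =
        ((Sigma.ι K i ≫ sigmaProj K j ≫ Sigma.ι K j).f n).hom y := fun j => by simp
    simp only [h1]
    rw [Finset.sum_eq_single i]
    · rw [ι_sigmaProj_self_assoc]
    · intro j _ hj
      rw [ι_sigmaProj_ne_assoc K hj.symm]
      simp
    · intro h; exact absurd (ht (Finset.mem_singleton_self i)) h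
  | zero => exact ⟨∅, fun t _ => by simp⟩
  | add x y _ _ hx hy =>
    obtain ⟨s, hs⟩ := hx
    obtain ⟨s', hs'⟩ := hy
    refine ⟨s ∪ s', fun t ht => ?_⟩
    simp only [map_add, Finset.sum_add_distrib]
    rw [hs t (Finset.union_subset_left ht), hs' t (Finset.union_subset_right ht)]

lemma sigma_homology {ι : Type u} (K : ι → CochainComplex (ModuleCat.{u} R) ℤ) (n : ℤ)
    (z : (∐ K).homology n) : ∃ s : Finset ι,
      z = ∑ i ∈ s, (HomologicalComplex.homologyMap (Sigma.ι K i) n).hom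
        ((HomologicalComplex.homologyMap (sigmaProj K i) n).hom z) := by
  obtain ⟨y, rfl⟩ := (ModuleCat.epi_iff_surjective ((∐ K).homologyπ n)).1 inferInstance z
  obtain ⟨s, hs⟩ := sigma_elem K n ((∐ K).iCycles n y)
  have h1 : HomologicalComplex.cyclesMap (∑ i ∈ s, sigmaProj K i ≫ Sigma.ι K i) n y = y := by
    apply (ModuleCat.mono_iff_injective ((∐ K).iCycles n)).1 inferInstance
    rw [← ConcreteCategory.comp_apply, HomologicalComplex.cyclesMap_i]
    exact hs
  refine ⟨s, ?_⟩
  conv_lhs => rw [← h1]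
  rw [← ConcreteCategory.comp_apply, ← HomologicalComplex.homologyπ_naturality,
    ConcreteCategory.comp_apply]
  generalize (∐ K).homologyπ n y = z
  refine (congr(($(complex_sum_homologyMap n s
    (fun i => sigmaProj K i ≫ Sigma.ι K i))).hom z)).trans ?_
  rw [ModuleCat.hom_sum, LinearMap.sum_apply]
  simp [HomologicalComplex.homologyMap_comp]

lemma sigma_homology_epi {ι : Type u} (K : ι → CochainComplex (ModuleCat.{u} R) ℤ) (n : ℤ)
    {Z : ModuleCat.{u} R} (g g' : (∐ K).homology n ⟶ Z)
    (h : ∀ i, HomologicalComplex.homologyMap (Sigma.ι K i) n ≫ g =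
      HomologicalComplex.homologyMap (Sigma.ι K i) n ≫ g') : g = g' := by
  ext z
  obtain ⟨s, hs⟩ := sigma_homology K n z
  rw [hs, map_sum, map_sum]
  refine Finset.sum_congr rfl fun i _ => ?_
  exact congr(($(h i)).hom _)

lemma sigma_quasiIso {ι : Type u} (K K' : ι → CochainComplex (ModuleCat.{u} R) ℤ)
    (f : ∀ i, K i ⟶ K' i) (hf : ∀ i, QuasiIso (f i)) : QuasiIso (Limits.Sigma.map f) := by
  have hp : ∀ i, Limits.Sigma.map f ≫ sigmaProj K' i = sigmaProj K i ≫ f i := by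
    intro i
    apply Limits.Sigma.hom_ext
    intro j
    by_cases h : j = i
    · subst h
      simp [ι_sigmaProj_self, ι_sigmaProj_self_assoc]
    · simp [ι_sigmaProj_ne _ h, ι_sigmaProj_ne_assoc _ h]
  have hb : ∀ i n, Function.Bijective (HomologicalComplex.homologyMap (f i) n).hom := fun i n => by
    rw [← ConcreteCategory.isIso_iff_bijective]; infer_instance
  rw [quasiIso_iff]
  intro n
  rw [quasiIsoAt_iff_isIso_homologyMap]
  rw [ConcreteCategory.isIso_iff_bijective]
  constructor
  · refine (injective_iff_map_eq_zero (HomologicalComplex.homologyMap (Limits.Sigma.map f) n).hom).2 ?_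
    intro z hz
    obtain ⟨s, hs⟩ := sigma_homology K n z
    rw [hs]
    refine Finset.sum_eq_zero fun i _ => ?_
    suffices (HomologicalComplex.homologyMap (sigmaProj K i) n).hom z = 0 by rw [this, map_zero]
    apply (hb i n).1
    rw [map_zero, ← ModuleCat.comp_apply, ← HomologicalComplex.homologyMap_comp, ← hp,
      HomologicalComplex.homologyMap_comp, ModuleCat.comp_apply, hz, map_zero]
  · intro w
    obtain ⟨s, hs⟩ := sigma_homology K' n w
    choose z hz using fun i => (hb i n).2 ((HomologicalComplex.homologyMap (sigmaProj K' i) n).hom w)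
    refine ⟨∑ i ∈ s, (HomologicalComplex.homologyMap (Sigma.ι K i) n).hom (z i), ?_⟩
    rw [map_sum]
    conv_rhs => rw [hs]
    refine Finset.sum_congr rfl fun i _ => ?_
    rw [← hz, ← ModuleCat.comp_apply, ← ModuleCat.comp_apply, ← HomologicalComplex.homologyMap_comp, ← HomologicalComplex.homologyMap_comp]
    simp
end PartB1

section PartB2
variable {R : Type u} [CommRing R] 

/-- `n`-th degree of a coproduct of complexes is a coproduct -/
noncomputable def sigmaXIsColimit {ι : Type u} (K : ι → CochainComplex (ModuleCat.{u} R) ℤ) (n : ℤ) :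
    IsColimit (Cofan.mk (f := fun i => (K i).X n) ((∐ K).X n) fun i => (Sigma.ι K i).f n) :=
    isColimitCofanMkObjOfIsColimit (HomologicalComplex.eval _ _ n) K (Sigma.ι K)
      (coproductIsCoproduct K)

lemma sigma_homotopy {ι : Type u} (K : ι → CochainComplex (ModuleCat.{u} R) ℤ)
    {Z : CochainComplex (ModuleCat.{u} R) ℤ} (g : (∐ K) ⟶ Z)
    (h : ∀ i, Nonempty (Homotopy (Sigma.ι K i ≫ g) 0)) : Nonempty (Homotopy g 0) := by
  let H := fun i => (h i).some
  let hom : ∀ n m, (∐ K).X n ⟶ Z.X m := fun n m =>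
    Cofan.IsColimit.desc (sigmaXIsColimit K n) fun i => (H i).hom n m
  have hhom : ∀ i n m, (Sigma.ι K i).f n ≫ hom n m = (H i).hom n m := fun i n m =>
    Cofan.IsColimit.fac (sigmaXIsColimit K n) _ i
  refine ⟨⟨hom, ?_, ?_⟩⟩
  · intro n m hnm
    apply Cofan.IsColimit.hom_ext (sigmaXIsColimit K n)
    intro i
    refine (hhom i n m).trans ?_
    rw [(H i).zero n m hnm, comp_zero]
  · intro n
    apply Cofan.IsColimit.hom_ext (sigmaXIsColimit K n)
    intro i
    have h1 := (H i).comm n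
    have r1 : (ComplexShape.up ℤ).Rel n (n+1) := by simp
    have r2 : (ComplexShape.up ℤ).Rel (n-1) n := by simp
    rw [dNext_eq _ r1, prevD_eq _ r2] at h1 ⊢
    refine Eq.trans ?_ (h1.trans ?_)
    · simp
    · simp only [Preadditive.comp_add, ← hhom]
      simp

variable [HasDerivedCategory.{w'} (ModuleCat.{u} R)]
open DerivedCategory

lemma sigma_Q_zero {ι : Type u} (K : ι → CochainComplex (ModuleCat.{u} R) ℤ)
    {Z : CochainComplex (ModuleCat.{u} R) ℤ} (g : (∐ K) ⟶ Z)
    (h : ∀ i, Q.map (Sigma.ι K i) ≫ Q.map g = 0) : Q.map g = 0 := by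
  have h1 : ∀ i, ∃ (K' : CochainComplex (ModuleCat.{u} R) ℤ) (t : K' ⟶ K i) (_ : QuasiIso t),
      Nonempty (Homotopy (t ≫ Sigma.ι K i ≫ g) 0) := by
    intro i
    have h2 : Qh.map ((HomotopyCategory.quotient _ _).map (Sigma.ι K i ≫ g)) =
        Qh.map ((HomotopyCategory.quotient _ _).map 0) := by
      rw [← cancel_mono ((quotientCompQhIso _).hom.app Z), quotientCompQhIso_hom_naturality,
        quotientCompQhIso_hom_naturality, Q.map_comp, h i, Q.map_zero]
    rw [MorphismProperty.map_eq_iff_precomp Qh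
      (HomotopyCategory.quasiIso (ModuleCat.{u} R) (ComplexShape.up ℤ))] at h2
    obtain ⟨X', s, hs, h3⟩ := h2
    obtain ⟨X', rfl⟩ := HomotopyCategory.quotient_obj_surjective X'
    obtain ⟨s, rfl⟩ := (HomotopyCategory.quotient _ _).map_surjective s
    refine ⟨X', s, by rwa [HomotopyCategory.quotient_map_mem_quasiIso_iff] at hs, ⟨HomotopyCategory.homotopyOfEq _ _ ?_⟩⟩
    rw [← Functor.map_comp, ← Functor.map_comp, comp_zero] at h3
    exact h3
  choose K' t ht hh using h1
  have := sigma_quasiIso K' K t ht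
  obtain ⟨hh'⟩ := sigma_homotopy K' (Limits.Sigma.map t ≫ g) (fun i => by simpa using hh i)
  have h4 := Q_map_eq_of_homotopy _ hh'
  rw [Q.map_comp, Q.map_zero] at h4
  have : IsIso (Q.map (Limits.Sigma.map t)) := by
    rwa [isIso_Q_map_iff_quasiIso]
  rw [← cancel_epi (Q.map (Limits.Sigma.map t)), h4, comp_zero]

lemma sigma_Q_hom_ext {ι : Type u} (K : ι → CochainComplex (ModuleCat.{u} R) ℤ)
    {Z : DerivedCategory (ModuleCat.{u} R)} (f : Q.obj (∐ K) ⟶ Z)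
    (h : ∀ i, Q.map (Sigma.ι K i) ≫ f = 0) : f = 0 := by
  let e := Q.objObjPreimageIso Z
  obtain ⟨Y', g, s, hs, hf⟩ := left_fac (f ≫ e.inv)
  have : Q.map g = 0 := by
    apply sigma_Q_zero
    intro i
    have := congr($(h i) ≫ e.inv ≫ Q.map s)
    rw [Category.assoc, reassoc_of% hf] at this
    simpa using this
  rw [← cancel_mono e.inv, hf, this, zero_comp, zero_comp]

lemma sigma_Q_exists {ι : Type u} (K : ι → CochainComplex (ModuleCat.{u} R) ℤ)
    {Z : DerivedCategory (ModuleCat.{u} R)} (f : ∀ i, Q.obj (K i) ⟶ Z) :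
    ∃ g : Q.obj (∐ K) ⟶ Z, ∀ i, Q.map (Sigma.ι K i) ≫ g = f i := by
  let e := Q.objObjPreimageIso Z
  choose K' s hs g hf using fun i => right_fac (f i ≫ e.inv)
  have := sigma_quasiIso K' K s (fun i => by rw [← isIso_Q_map_iff_quasiIso]; exact hs i)
  have : IsIso (Q.map (Limits.Sigma.map s)) := by
    rwa [isIso_Q_map_iff_quasiIso]
  refine ⟨inv (Q.map (Limits.Sigma.map s)) ≫ Q.map (Sigma.desc g) ≫ e.hom, fun i => ?_⟩
  rw [← cancel_mono e.inv, hf]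
  have := hs i
  rw [← cancel_epi (Q.map (s i))]
  have h1 : Q.map (s i) ≫ Q.map (Sigma.ι K i) = Q.map (Sigma.ι K' i) ≫ Q.map (Limits.Sigma.map s) := by
    rw [← Q.map_comp, ← Q.map_comp]; simp
  simp only [Category.assoc, IsIso.hom_inv_id_assoc, Iso.hom_inv_id, Category.comp_id]
  rw [reassoc_of% h1, IsIso.hom_inv_id_assoc, ← Q.map_comp]
  simp

/-- coproducts in the derived category -/
noncomputable def sigmaQIsColimit {ι : Type u} (K : ι → CochainComplex (ModuleCat.{u} R) ℤ) :
    IsColimit (Cofan.mk (f := fun i => Q.obj (K i)) (Q.obj (∐ K)) fun i => Q.map (Sigma.ι K i)) :=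
  Cofan.IsColimit.mk _ (fun s => (sigma_Q_exists K (fun i => s.inj i)).choose)
    (fun s i => (sigma_Q_exists K (fun i => s.inj i)).choose_spec i)
    (fun s m hm => by
      rw [← sub_eq_zero]
      apply sigma_Q_hom_ext
      intro i
      have := (sigma_Q_exists K (fun i => s.inj i)).choose_spec i
      rw [Preadditive.comp_sub, this, sub_eq_zero]
      exact hm i)

lemma exists_coprod {ι : Type u} (Y : ι → DerivedCategory (ModuleCat.{u} R)) :
    ∃ (c : Cofan Y) (_ : IsColimit c), ∀ (n : ℤ) (Z : ModuleCat.{u} R)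
      (g g' : (homologyFunctor _ n).obj c.pt ⟶ Z),
      (∀ i, (homologyFunctor _ n).map (c.inj i) ≫ g =
        (homologyFunctor _ n).map (c.inj i) ≫ g') → g = g' := by
  let K := fun i => Q.objPreimage (Y i)
  let e := fun i => Q.objObjPreimageIso (Y i)
  refine ⟨Cofan.mk (Q.obj (∐ K)) fun i => (e i).inv ≫ Q.map (Sigma.ι K i), ?_, ?_⟩
  · exact Cofan.IsColimit.mk _
      (fun s => Cofan.IsColimit.desc (sigmaQIsColimit K) fun i => (e i).hom ≫ s.inj i)
      (fun s i => by
        have := Cofan.IsColimit.fac (sigmaQIsColimit K) (fun i => (e i).hom ≫ s.inj i) i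
        dsimp at this ⊢
        simp [this])
      (fun s m hm => by
        apply Cofan.IsColimit.hom_ext (sigmaQIsColimit K)
        intro i
        have := Cofan.IsColimit.fac (sigmaQIsColimit K) (fun i => (e i).hom ≫ s.inj i) i
        rw [this, ← hm]
        simp)
  · intro n Z g g' h
    have h' : ∀ i, (homologyFunctor _ n).map (Q.map (Sigma.ι K i)) ≫ g =
        (homologyFunctor _ n).map (Q.map (Sigma.ι K i)) ≫ g' := by
      intro i
      have := congr((homologyFunctor (ModuleCat.{u} R) n).map (e i).hom ≫ $(h i))
      rw [← Functor.map_comp_assoc, ← Functor.map_comp_assoc] at this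
      have h2 : (e i).hom ≫ (Cofan.mk (Q.obj (∐ K)) fun i => (e i).inv ≫ Q.map (Sigma.ι K i)).inj i
        = Q.map (Sigma.ι K i) := by simp
      rwa [h2] at this
    rw [← cancel_epi ((homologyFunctorFactors _ n).inv.app (∐ K))]
    apply sigma_homology_epi
    intro i
    have nat := (homologyFunctorFactors (ModuleCat.{u} R) n).inv.naturality (Sigma.ι K i)
    refine Eq.trans ?_ (Eq.trans (congr((homologyFunctorFactors (ModuleCat.{u} R) n).inv.app (K i) ≫ $(h' i))) ?_)
    · exact (Category.assoc _ _ _).symm.trans ((congr($nat ≫ g)).trans (Category.assoc _ _ _))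
    · exact ((Category.assoc _ _ _).symm.trans ((congr($nat ≫ g')).trans (Category.assoc _ _ _))).symm

lemma exists_coprod_nat (Y : ℕ → DerivedCategory (ModuleCat.{u} R)) :
    ∃ (c : Cofan Y) (_ : IsColimit c), ∀ (n : ℤ) (Z : ModuleCat.{u} R)
      (g g' : (homologyFunctor _ n).obj c.pt ⟶ Z),
      (∀ i, (homologyFunctor _ n).map (c.inj i) ≫ g =
        (homologyFunctor _ n).map (c.inj i) ≫ g') → g = g' := by
  obtain ⟨c, hc, h⟩ := exists_coprod (fun i : ULift.{u} ℕ => Y i.down)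
  refine ⟨Cofan.mk c.pt fun i => c.inj ⟨i⟩, ?_, ?_⟩
  · exact Cofan.IsColimit.mk _
      (fun s => Cofan.IsColimit.desc hc fun i => s.inj i.down)
      (fun s i => Cofan.IsColimit.fac hc (fun i => s.inj i.down) ⟨i⟩)
      (fun s m hm => by
        apply Cofan.IsColimit.hom_ext hc
        intro i
        rw [Cofan.IsColimit.fac hc (fun i => s.inj i.down) i]
        exact hm i.down)
  · intro n Z g g' hh
    exact h n Z g g' (fun i => hh i.down)

lemma hasCoproductsNat : HasCoproductsOfShape ℕ (DerivedCategory (ModuleCat.{u} R)) where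
  has_colimit F := by
    obtain ⟨c, hc, _⟩ := exists_coprod_nat (fun i => F.obj ⟨i⟩)
    have : HasColimit (Discrete.functor (F.obj ∘ Discrete.mk)) := ⟨⟨c, hc⟩⟩
    exact hasColimit_of_iso Discrete.natIsoFunctor

lemma IsLocalizingSub.retract_mem' {L : Set (DerivedCategory (ModuleCat.{u} R))}
    (hL : IsLocalizingSub.{w} L) {X Y : DerivedCategory (ModuleCat.{u} R)}
    (s : X ⟶ Y) (r : Y ⟶ X) (hsr : s ≫ r = 𝟙 X) (hY : Y ∈ L) : X ∈ L := by
  obtain ⟨c, hc, _⟩ := exists_coprod_nat (fun _ => Y)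
  exact hL.retract_mem s r hsr c hc hY

end PartB2

section PartC
variable {R : Type u} [CommRing R] [HasDerivedCategory.{w'} (ModuleCat.{u} R)]
open DerivedCategory

/-- composites in a sequence -/
noncomputable def teleComp {D : Type*} [Category* D] {Y : ℕ → D} (d : ∀ k, Y k ⟶ Y (k+1)) :
    ∀ k, Y 0 ⟶ Y k
  | 0 => 𝟙 _
  | k+1 => teleComp d k ≫ d k

lemma telescope {L : Set (DerivedCategory (ModuleCat.{u} R))}
    (hL : IsLocalizingSub.{w} L) (Y : ℕ → DerivedCategory (ModuleCat.{u} R))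
    (d : ∀ k, Y k ⟶ Y (k+1)) (hd : ∀ k, (locProp L).trW (d k))
    (hY : ∀ j : ℤ, ∃ n0 : ℕ, ∀ k, n0 ≤ k → IsZero ((homologyFunctor _ j).obj (Y k))) :
    Y 0 ∈ L := by
  have := hL.isTriangulated
  have := hasCoproductsNat (R := R)
  obtain ⟨c, hc, hepi⟩ := exists_coprod_nat Y
  obtain ⟨c0, hc0, _⟩ := exists_coprod_nat (fun _ => Y 0)
  have ha : ∀ k, (locProp L).trW (teleComp d k) := by
    intro k
    induction k with
    | zero => exact MorphismProperty.id_mem _ _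
    | succ k ih => exact MorphismProperty.comp_mem _ _ _ ih (hd k)
  obtain ⟨α, hα⟩ : ∃ α : c0.pt ⟶ c.pt, ∀ k, c0.inj k ≫ α = teleComp d k ≫ c.inj k :=
    ⟨Cofan.IsColimit.desc hc0 fun k => teleComp d k ≫ c.inj k, Cofan.IsColimit.fac hc0 _⟩
  have hαW := hL.trW_coprod _ _ _ ha c0 hc0 c hc α hα
  obtain ⟨s, hs⟩ : ∃ s : c.pt ⟶ c.pt, ∀ k, c.inj k ≫ s = d k ≫ c.inj (k+1) :=
    ⟨Cofan.IsColimit.desc hc fun k => d k ≫ c.inj (k+1), Cofan.IsColimit.fac hc _⟩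
  obtain ⟨τ, hτ⟩ : ∃ τ : c0.pt ⟶ c0.pt, ∀ k, c0.inj k ≫ τ = c0.inj (k+1) :=
    ⟨Cofan.IsColimit.desc hc0 fun k => c0.inj (k+1), Cofan.IsColimit.fac hc0 _⟩
  have hiso : IsIso (𝟙 c.pt - s) := by
    rw [isIso_iff]
    intro j
    obtain ⟨n0, hn0⟩ := hY j
    let S : End ((homologyFunctor _ j).obj c.pt) := (homologyFunctor _ j).map s
    have hS : ∀ n k, n0 ≤ k + n → (homologyFunctor _ j).map (c.inj k) ≫ (S ^ n : End _) = 0 := by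
      intro n
      induction n with
      | zero => intro k hk; exact (hn0 k hk).eq_of_src _ _
      | succ n ih =>
        intro k hk
        have h1 : (S ^ (n+1) : End _) = S ≫ (S ^ n : End _) := by
          first
          | exact pow_succ S n
          | exact pow_succ' S n
        rw [h1]
        have h2 : (homologyFunctor _ j).map (c.inj k) ≫ S =
            (homologyFunctor _ j).map (d k) ≫ (homologyFunctor _ j).map (c.inj (k+1)) := by
          rw [← Functor.map_comp, hs, Functor.map_comp]
        rw [reassoc_of% h2, ih (k+1) (by omega), comp_zero]
    have hnil : S ^ n0 = 0 := by
      apply hepi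
      intro i
      rw [hS n0 i (by omega)]
      exact comp_zero.symm
    have hu : IsUnit (1 - S) := IsNilpotent.isUnit_one_sub ⟨n0, hnil⟩
    rw [isUnit_iff_isIso] at hu
    have h3 : (homologyFunctor _ j).map (𝟙 c.pt - s) = (1 - S : End _) := by
      rw [Functor.map_sub, CategoryTheory.Functor.map_id]; rfl
    rw [h3]; exact hu
  have hcomm : (𝟙 c0.pt - τ) ≫ α = α ≫ (𝟙 c.pt - s) := by
    apply Cofan.IsColimit.hom_ext hc0
    intro k
    simp only [Preadditive.sub_comp, Preadditive.comp_sub, Category.id_comp, Category.comp_id,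
      reassoc_of% hτ, reassoc_of% hα, hα, hs]
    simp [teleComp]
  have hW : (locProp L).trW (𝟙 c0.pt - τ) := by
    apply hL.trW_of_postcomp _ α hαW
    rw [hcomm]
    exact MorphismProperty.comp_mem _ _ _ hαW (ObjectProperty.trW_of_isIso _ _)
  obtain ⟨Z, g, h, hT, hZ⟩ := hW
  obtain ⟨q, hq⟩ : ∃ q : c0.pt ⟶ Y 0, ∀ k, c0.inj k ≫ q = 𝟙 _ :=
    ⟨Cofan.IsColimit.desc hc0 fun k => 𝟙 _, Cofan.IsColimit.fac hc0 _⟩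
  have h0 : (𝟙 c0.pt - τ) ≫ q = 0 := by
    apply Cofan.IsColimit.hom_ext hc0
    intro k
    simp [Preadditive.sub_comp, Preadditive.comp_sub, reassoc_of% hτ, hq]
  obtain ⟨p, hp⟩ : ∃ p : Z ⟶ Y 0, q = g ≫ p := Triangle.yoneda_exact₂ _ hT q h0
  refine hL.retract_mem' (c0.inj 0 ≫ g) p ?_ hZ
  rw [Category.assoc, ← hp, hq]

end PartC

section PartE
open CochainComplex Opposite

lemma quasiIso_of_op {A : Type*} [Category* A] [Abelian A] {K L : CochainComplex A ℤ} (f : K ⟶ L)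
    (h : QuasiIso ((CochainComplex.opEquivalence A).functor.map f.op)) : QuasiIso f := by
  rw [← HomologicalComplex.quasiIso_opFunctor_map_iff]
  rw [quasiIso_iff] at h ⊢
  intro n
  have := h (-n)
  rw [quasiIsoAt_iff' _ (-n-1) (-n) (-n+1) (by simp) (by simp)] at this
  rw [quasiIsoAt_iff' _ (n+1) n (n-1) (ComplexShape.prev_eq' _ (by simp)) (ComplexShape.next_eq' _ (by simp))]
  obtain ⟨m, rfl⟩ : ∃ m, n = -m := ⟨-n, by simp⟩
  have e1 : -m+1 = -(-(-m)-1) := by ring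
  have e2 : -m-1 = -(-(-m)+1) := by ring
  have e3 : -m = -(-(-m)) := by ring
  rw [e1, e2]
  have key : ∀ a b c : ℤ, ShortComplex.QuasiIso ((HomologicalComplex.shortComplexFunctor' Aᵒᵖ (.up ℤ) a b c).map ((CochainComplex.opEquivalence A).functor.map f.op)) → 
    ShortComplex.QuasiIso ((HomologicalComplex.shortComplexFunctor' Aᵒᵖ (ComplexShape.symm (.up ℤ)) (-a) (-b) (-c)).map ((HomologicalComplex.opFunctor A _).map f.op)) := by
    intro a b c h
    exact h
  have := key _ _ _ this
  rw [neg_neg m] at this ⊢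
  exact this

lemma exists_proj_le {A : Type u} [Category.{v} A] [Abelian A] [EnoughProjectives A] (K : CochainComplex A ℤ) (n : ℤ)
    [K.IsStrictlyLE n] : ∃ (P : CochainComplex A ℤ) (f : P ⟶ K), QuasiIso f ∧ (∀ j, Projective (P.X j)) ∧
      P.IsStrictlyLE n := by
  let E := CochainComplex.opEquivalence A
  have : (E.functor.obj (op K)).IsStrictlyGE (-n) := by
    rw [CochainComplex.isStrictlyGE_iff]
    intro i hi
    exact (K.isZero_of_isStrictlyLE n (-i) (by lia)).op
  obtain ⟨L, φ, hφ, hL, hL'⟩ := CochainComplex.Plus.modelCategoryQuillen.exists_quasiIso_injective (E.functor.obj (op K)) (-n)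
  let ψ : op K ⟶ E.inverse.obj L := E.unit.app _ ≫ E.inverse.map φ
  have hψ : E.functor.map ψ = φ ≫ E.counitInv.app L := by
    dsimp [ψ]; simp
  refine ⟨(E.inverse.obj L).unop, ψ.unop, quasiIso_of_op _ ?_, ?_, ?_⟩
  · change QuasiIso (E.functor.map ψ)
    rw [hψ]; infer_instance
  · intro j
    change Projective (L.X (-j)).unop
    infer_instance
  · rw [CochainComplex.isStrictlyLE_iff]
    intro i hi
    exact (L.isZero_of_isStrictlyGE (-n) (-i) (by lia)).unop

lemma exists_proj {R : Type u} [CommRing R] (K : CochainComplex (ModuleCat.{u} R) ℤ) (n : ℤ)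
    (hK : ∀ j, n < j → IsZero (K.homology j)) :
    ∃ (P : CochainComplex (ModuleCat.{u} R) ℤ) (f : P ⟶ K), QuasiIso f ∧ (∀ j, Projective (P.X j)) ∧
      (∀ j, n < j → IsZero (P.X j)) := by
  have : K.IsLE n := by
    rw [CochainComplex.isLE_iff]
    intro i hi
    rw [HomologicalComplex.exactAt_iff_isZero_homology]
    exact hK i hi
  have : QuasiIso (K.ιTruncLE n) := inferInstance
  obtain ⟨P, f, hf, hP, hP'⟩ := exists_proj_le (K.truncLE n) n
  exact ⟨P, f ≫ K.ιTruncLE n, inferInstance, hP, fun j hj => P.isZero_of_isStrictlyLE n j hj⟩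
end PartE

section PartD
variable {R : Type u} [CommRing R]
open MonoidalCategory

/-- termwise tensor product of a complex with a module -/
noncomputable def tensorC (P : CochainComplex (ModuleCat.{u} R) ℤ) :
    ModuleCat.{u} R ⥤ CochainComplex (ModuleCat.{u} R) ℤ where
  obj N :=
    { X := fun n => P.X n ⊗ N
      d := fun i j => P.d i j ▷ N
      shape := fun i j h => by rw [P.shape _ _ h]; simp
      d_comp_d' := fun i j k _ _ => by rw [← comp_whiskerRight]; simp }
  map f :=
    { f := fun n => P.X n ◁ f
      comm' := fun i j _ => by simp [whisker_exchange] }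

noncomputable def tensorCUnit (P : CochainComplex (ModuleCat.{u} R) ℤ) :
    (tensorC P).obj (𝟙_ (ModuleCat.{u} R)) ≅ P :=
  HomologicalComplex.Hom.isoOfComponents (fun n => ρ_ (P.X n)) (fun i j _ => by simp [tensorC])

noncomputable def tensorCEval (P : CochainComplex (ModuleCat.{u} R) ℤ) (n : ℤ) :
    tensorC P ⋙ HomologicalComplex.eval _ _ n ≅ tensorLeft (P.X n) :=
  NatIso.ofComponents (fun N => Iso.refl _) (fun f => (Category.comp_id _).trans (Category.id_comp _).symm)

lemma tensorC_preserves (P : CochainComplex (ModuleCat.{u} R) ℤ) (ι : Type u) :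
    PreservesColimitsOfShape (Discrete ι) (tensorC P) := by
  have : ∀ n, PreservesColimitsOfShape (Discrete ι) (tensorC P ⋙ HomologicalComplex.eval _ _ n) :=
    fun n => preservesColimitsOfShape_of_natIso (tensorCEval P n).symm
  exact HomologicalComplex.preservesColimitsOfShape_of_eval _ this

instance (P : CochainComplex (ModuleCat.{u} R) ℤ) : (tensorC P).PreservesZeroMorphisms where
  map_zero X Y := by ext1 n; exact MonoidalPreadditive.whiskerLeft_zero

lemma tensorC_shortExact (P : CochainComplex (ModuleCat.{u} R) ℤ)
    (hP : ∀ n, Projective (P.X n)) (S : ShortComplex (ModuleCat.{u} R)) (hS : S.ShortExact) :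
    (S.map (tensorC P)).ShortExact := by
  apply HomologicalComplex.shortExact_of_degreewise_shortExact
  intro n
  have hproj : Module.Projective R (P.X n) := by
    rw [IsProjective.iff_projective]; exact hP n
  have h1 : (S.map (tensorLeft (P.X n))).Exact :=
    Module.Flat.lTensor_shortComplex_exact (P.X n) S hS.exact
  have := hS.mono_f
  have := hS.epi_g
  refine { exact := h1, mono_f := ?_, epi_g := ?_ }
  · rw [ModuleCat.mono_iff_injective]
    exact Module.Flat.lTensor_preserves_injective_linearMap S.f.hom ((ModuleCat.mono_iff_injective _).mp hS.mono_f)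
  · exact inferInstanceAs (Epi ((tensorLeft (P.X n)).map S.g))

variable [HasDerivedCategory.{w'} (ModuleCat.{u} R)]
open DerivedCategory

lemma tensorC_free_mem (P : CochainComplex (ModuleCat.{u} R) ℤ)
    {L : Set (DerivedCategory (ModuleCat.{u} R))}
    (hL : IsLocalizingSub.{u} L) (hP : Q.obj P ∈ L) (ι : Type u) :
    Q.obj ((tensorC P).obj (∐ fun _ : ι => 𝟙_ (ModuleCat.{u} R))) ∈ L := by
  have := tensorC_preserves P ι
  refine hL.mem_of_iso (Q.mapIso (PreservesCoproduct.iso (tensorC P) (fun _ : ι => 𝟙_ (ModuleCat.{u} R))).symm) ?_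
  refine hL.coprod_mem _ _ (sigmaQIsColimit _) ?_
  intro i
  exact hL.mem_of_iso (Q.mapIso (tensorCUnit P).symm) hP

lemma exists_free_ses (N : ModuleCat.{u} R) : ∃ (ι : Type u) (S : ShortComplex (ModuleCat.{u} R)),
    S.ShortExact ∧ S.X₃ = N ∧ S.X₂ = ∐ fun _ : ι => 𝟙_ (ModuleCat.{u} R) := by
  let g : (∐ fun _ : N => 𝟙_ (ModuleCat.{u} R)) ⟶ N :=
    Sigma.desc fun x => ModuleCat.ofHom (LinearMap.toSpanSingleton R N x)
  have hg : Epi g := by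
    rw [ModuleCat.epi_iff_surjective]
    intro x
    refine ⟨(Sigma.ι (fun _ : N => 𝟙_ (ModuleCat.{u} R)) x).hom (1 : R), ?_⟩
    have : Sigma.ι (fun _ : N => 𝟙_ (ModuleCat.{u} R)) x ≫ g = ModuleCat.ofHom (LinearMap.toSpanSingleton R N x) := by
      simp [g]
    have h2 := congr(($this).hom (1 : R))
    refine Eq.trans h2 ?_
    simp
  refine ⟨N, ShortComplex.mk (kernel.ι g) g (by simp), ?_, rfl, rfl⟩
  exact { exact := ShortComplex.exact_kernel g, mono_f := inferInstance, epi_g := hg }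

lemma tensorC_step (P : CochainComplex (ModuleCat.{u} R) ℤ)
    (hPp : ∀ n, Projective (P.X n))
    {L : Set (DerivedCategory (ModuleCat.{u} R))}
    (hL : IsLocalizingSub.{u} L) (hP : Q.obj P ∈ L) (N : ModuleCat.{u} R) :
    ∃ (N' : ModuleCat.{u} R) (d : Q.obj ((tensorC P).obj N) ⟶ (Q.obj ((tensorC P).obj N'))⟦(1 : ℤ)⟧),
      (locProp L).trW d := by
  obtain ⟨ι, S, hS, rfl, h2⟩ := exists_free_ses N
  have hT := triangleOfSES_distinguished (tensorC_shortExact P hPp S hS)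
  refine ⟨S.X₁, (triangleOfSES (tensorC_shortExact P hPp S hS)).mor₃, ?_⟩
  have := hL.isTriangulated
  refine ObjectProperty.trW.mk' _ (rot_of_distTriang _ hT) ?_
  change Q.obj ((tensorC P).obj S.X₂) ∈ L
  rw [h2]
  exact tensorC_free_mem P hL hP ι

lemma isZero_homology_shift (K : CochainComplex (ModuleCat.{u} R) ℤ) (n j : ℤ)
    (h : IsZero (K.X (n + j))) :
    IsZero ((homologyFunctor (ModuleCat.{u} R) j).obj ((Q.obj K)⟦n⟧)) := by
  have e1 : (homologyFunctor (ModuleCat.{u} R) j).obj ((Q.obj K)⟦n⟧) ≅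
      (homologyFunctor (ModuleCat.{u} R) (n+j)).obj (Q.obj K) :=
    ((homologyFunctor (ModuleCat.{u} R) 0).shiftIso n j (n+j) rfl).app (Q.obj K)
  refine IsZero.of_iso ?_ (e1 ≪≫ (homologyFunctorFactors (ModuleCat.{u} R) (n+j)).app K)
  exact (HomologicalComplex.exactAt_iff_isZero_homology _ _).mp
    (ShortComplex.exact_of_isZero_X₂ _ h)

lemma tensorC_mem (P : CochainComplex (ModuleCat.{u} R) ℤ)
    (hPp : ∀ n, Projective (P.X n)) (i : ℤ) (hPi : ∀ j, i < j → IsZero (P.X j))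
    {L : Set (DerivedCategory (ModuleCat.{u} R))}
    (hL : IsLocalizingSub.{u} L) (hP : Q.obj P ∈ L) (N : ModuleCat.{u} R) :
    Q.obj ((tensorC P).obj N) ∈ L := by
  choose nx d hd using tensorC_step P hPp hL hP
  let NN : ℕ → ModuleCat.{u} R := fun k => Nat.rec N (fun _ M => nx M) k
  let Y : ℕ → DerivedCategory (ModuleCat.{u} R) := fun k =>
    (Q.obj ((tensorC P).obj (NN k)))⟦(k : ℤ)⟧
  have := hL.isTriangulated
  let dd : ∀ k, Y k ⟶ Y (k+1) := fun k =>
    (d (NN k))⟦(k : ℤ)⟧' ≫ (shiftFunctorAdd' _ (1 : ℤ) (k : ℤ) ((k + 1 : ℕ) : ℤ)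
      (by push_cast; ring)).inv.app (Q.obj ((tensorC P).obj (nx (NN k))))
  have hY := telescope hL Y dd (fun k => MorphismProperty.RespectsIso.postcomp _ _ _
      ((hd (NN k)).shift (k : ℤ))) (by
    intro j
    refine ⟨(i + 1 - j).toNat, fun k hk => ?_⟩
    refine isZero_homology_shift _ _ _ ?_
    have hz := hPi ((k : ℤ) + j) (by lia)
    exact (tensorRight (NN k)).map_isZero hz)
  exact hL.mem_of_iso ((shiftFunctorZero (DerivedCategory (ModuleCat.{u} R)) ℤ).app _) hY
end PartD

section PartF1
variable {R : Type u} [CommRing R]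
open MonoidalCategory

lemma module_step {M : Type*} [AddCommGroup M] [Module R M] {k : ℕ} (v : Fin (k+1) → M)
    (hv : Submodule.span R (Set.range v) = ⊤) :
    ∃ (J : Ideal R) (π : M →ₗ[R] R ⧸ J), Function.Surjective π ∧
      ∃ u : Fin k → M, Submodule.span R (Set.range u) = LinearMap.ker π := by
  let N := Submodule.span R (Set.range (fun j : Fin k => v j.castSucc))
  let q := LinearMap.toSpanSingleton R (M ⧸ N) (N.mkQ (v (Fin.last k)))
  have hq : Function.Surjective q := by
    rw [← LinearMap.range_eq_top, ← top_le_iff]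
    have h1 : Submodule.map N.mkQ ⊤ = ⊤ := by simp
    rw [← h1, ← hv, Submodule.map_span, Submodule.span_le]
    rintro _ ⟨_, ⟨j, rfl⟩, rfl⟩
    induction j using Fin.lastCases with
    | last => exact ⟨1, by simp [q]⟩
    | cast j =>
      have : N.mkQ (v j.castSucc) = 0 := by
        rw [← LinearMap.mem_ker, Submodule.ker_mkQ]
        exact Submodule.subset_span ⟨j, rfl⟩
      rw [this]; exact Submodule.zero_mem _
  let e := q.quotKerEquivOfSurjective hq
  refine ⟨LinearMap.ker q, e.symm.toLinearMap ∘ₗ N.mkQ, ?_, fun j => v j.castSucc, ?_⟩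
  · exact e.symm.surjective.comp N.mkQ_surjective
  · rw [LinearMap.ker_comp, LinearEquiv.ker, Submodule.comap_bot, Submodule.ker_mkQ]

variable [HasDerivedCategory.{w'} (ModuleCat.{u} R)]
open DerivedCategory

lemma single_mem (P : CochainComplex (ModuleCat.{u} R) ℤ)
    (hPp : ∀ n, Projective (P.X n)) (i : ℤ) (hPi : ∀ j, i < j → IsZero (P.X j))
    {L : Set (DerivedCategory (ModuleCat.{u} R))}
    (hL : IsLocalizingSub.{u} L) (hP : Q.obj P ∈ L) (J : Ideal R)
    (φ : P.X i ⟶ ModuleCat.of R (R ⧸ J)) (hφ : Function.Surjective φ)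
    (hφ' : ∀ j, P.d j i ≫ φ = 0) :
    Q.obj ((HomologicalComplex.single (ModuleCat.{u} R) (.up ℤ) i).obj (ModuleCat.of R (R ⧸ J))) ∈ L := by
  let A := ModuleCat.of R (R ⧸ J)
  obtain ⟨p, hp⟩ := hφ (1 : R ⧸ J)
  let s0 : A ⟶ ((tensorC P).obj A).X i := ModuleCat.ofHom (TensorProduct.mk R (P.X i) A p)
  let r0 : ((tensorC P).obj A).X i ⟶ A := ModuleCat.ofHom (TensorProduct.lift ((LinearMap.mul R (R ⧸ J)).comp φ.hom))
  have hsr : s0 ≫ r0 = 𝟙 A := by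
    ext
    change TensorProduct.lift ((LinearMap.mul R (R ⧸ J)).comp φ.hom) (p ⊗ₜ[R] _) = _
    rw [TensorProduct.lift.tmul]
    change φ.hom p * _ = _
    erw [hp]
    rw [one_mul]; rfl
  have hr : ∀ j, ((tensorC P).obj A).d j i ≫ r0 = 0 := by
    intro j
    apply ModuleCat.hom_ext
    apply TensorProduct.ext'
    intro x y
    change φ.hom (P.d j i x) * y = 0
    have h2 : φ.hom (P.d j i x) = 0 := congr(($(hφ' j)).hom x)
    rw [h2, zero_mul]
  let s : (HomologicalComplex.single (ModuleCat.{u} R) (.up ℤ) i).obj A ⟶ (tensorC P).obj A :=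
    HomologicalComplex.mkHomFromSingle s0 (by
      intro k hk
      apply IsZero.eq_zero_of_tgt
      exact (tensorRight A).map_isZero (hPi k (by simp at hk; lia)))
  let r : (tensorC P).obj A ⟶ (HomologicalComplex.single (ModuleCat.{u} R) (.up ℤ) i).obj A :=
    HomologicalComplex.mkHomToSingle r0 (fun k _ => hr k)
  have h : s ≫ r = 𝟙 _ := by
    apply HomologicalComplex.from_single_hom_ext
    have e1 : s.f i = _ := HomologicalComplex.mkHomFromSingle_f _ _
    have e2 : r.f i = _ := HomologicalComplex.mkHomToSingle_f _ _
    rw [HomologicalComplex.comp_f, e1, e2, Category.assoc]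
    have : s0 ≫ r0 ≫ (HomologicalComplex.singleObjXSelf (.up ℤ) i A).inv = (HomologicalComplex.singleObjXSelf (.up ℤ) i A).inv := by
      rw [← Category.assoc, hsr, Category.id_comp]
    refine Eq.trans congr(_ ≫ $this) ?_
    simp
  exact hL.retract_mem' (Q.map s) (Q.map r) (by rw [← CategoryTheory.Functor.map_comp, h, CategoryTheory.Functor.map_id])
    (tensorC_mem P hPp i hPi hL hP A)

lemma smod_mem {L : Set (DerivedCategory (ModuleCat.{u} R))}
    (hL : IsLocalizingSub.{u} L) (i : ℤ) (A : ModuleCat.{u} R) :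
    smod R A ∈ L ↔ Q.obj ((HomologicalComplex.single (ModuleCat.{u} R) (.up ℤ) i).obj A) ∈ L := by
  constructor
  · intro h
    exact hL.mem_of_iso (((singleFunctors (ModuleCat.{u} R)).shiftIso (-i) i 0 (by simp)).app A) (hL.shift_mem _ h)
  · intro h
    exact hL.mem_of_iso (((singleFunctors (ModuleCat.{u} R)).shiftIso i 0 i (by simp)).app A) (hL.shift_mem _ h)
end PartF1

section PartF2
variable {R : Type u} [CommRing R]

/-- map from top term to a module through homology -/
lemma exists_to_single (P : CochainComplex (ModuleCat.{u} R) ℤ) (i : ℤ)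
    (hPi : ∀ j, i < j → IsZero (P.X j)) (A : ModuleCat.{u} R) (π : P.homology i ⟶ A)
    (hπ : Function.Surjective π) :
    ∃ (φ0 : P.X i ⟶ A) (φ : P ⟶ (HomologicalComplex.single (ModuleCat.{u} R) (.up ℤ) i).obj A),
      Function.Surjective φ0 ∧ (∀ j, P.d j i ≫ φ0 = 0) ∧ Epi φ ∧
      HomologicalComplex.homologyMap φ i ≫
        (HomologicalComplex.singleObjHomologySelfIso (.up ℤ) i A).hom = π := by
  have hi : IsIso (P.homologyι i) := P.isIso_homologyι i (i+1) (by simp)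
    ((hPi _ (by lia)).eq_zero_of_tgt _)
  let φ0 : P.X i ⟶ A := P.pOpcycles i ≫ inv (P.homologyι i) ≫ π
  have hd : ∀ j, P.d j i ≫ φ0 = 0 := fun j => by simp [φ0]
  have hepi : Epi φ0 := by
    have : Epi π := (ModuleCat.epi_iff_surjective _).mpr hπ
    dsimp [φ0]; infer_instance
  let φ : P ⟶ (HomologicalComplex.single (ModuleCat.{u} R) (.up ℤ) i).obj A :=
    HomologicalComplex.mkHomToSingle φ0 (fun k _ => hd k)
  have e2 : φ.f i = _ := HomologicalComplex.mkHomToSingle_f _ _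
  refine ⟨φ0, φ, (ModuleCat.epi_iff_surjective _).mp hepi, hd, ?_, ?_⟩
  · have : ∀ j, Epi (φ.f j) := by
      intro j
      by_cases hj : j = i
      · subst hj
        rw [e2]; infer_instance
      · exact ⟨fun _ _ _ => (HomologicalComplex.isZero_single_obj_X (.up ℤ) i A j hj).eq_of_src _ _⟩
    exact HomologicalComplex.epi_of_epi_f _ this
  · rw [← cancel_epi (P.homologyπ i)]
    rw [HomologicalComplex.homologyπ_naturality_assoc,
      HomologicalComplex.homologyπ_singleObjHomologySelfIso_hom,
      HomologicalComplex.singleObjCyclesSelfIso_hom, HomologicalComplex.cyclesMap_i_assoc, e2]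
    simp only [φ0, Category.assoc, Iso.inv_hom_id, Category.comp_id]
    rw [← HomologicalComplex.homology_π_ι_assoc]; simp

lemma kernel_homology (i : ℤ)
    (S : ShortComplex (CochainComplex (ModuleCat.{u} R) ℤ)) (hS : S.ShortExact)
    (h3 : ∀ j, j ≠ i → IsZero (S.X₃.homology j))
    (hφ : Epi (HomologicalComplex.homologyMap S.g i)) :
    (∀ j, Mono (HomologicalComplex.homologyMap S.f j)) ∧
    (∀ j, j ≠ i → IsIso (HomologicalComplex.homologyMap S.f j)) := by
  have hm : ∀ j, Mono (HomologicalComplex.homologyMap S.f j) := by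
    intro j
    have hδ : hS.δ (j-1) j (by simp) = 0 := by
      by_cases hj : j - 1 = i
      · subst hj
        rw [← cancel_epi (HomologicalComplex.homologyMap S.g (j-1)), hS.comp_δ, comp_zero]
      · exact (h3 _ hj).eq_zero_of_src _
    exact ((hS.homology_exact₁ (j-1) j (by simp)).mono_g_iff).mpr hδ
  refine ⟨hm, fun j hj => ?_⟩
  have := hm j
  have : Epi (HomologicalComplex.homologyMap S.f j) :=
    ((hS.homology_exact₂ j).epi_f_iff).mpr ((h3 _ hj).eq_zero_of_tgt _)
  exact isIso_of_mono_of_epi _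

variable [HasDerivedCategory.{w'} (ModuleCat.{u} R)]
open DerivedCategory

lemma main_step (C : CochainComplex (ModuleCat.{u} R) ℤ) (i : ℤ)
    (hC : ∀ j, i < j → IsZero (C.homology j)) {k : ℕ} (v : Fin (k+1) → C.homology i)
    (hv : Submodule.span R (Set.range v) = ⊤) :
    ∃ (J : Ideal R) (P' : CochainComplex (ModuleCat.{u} R) ℤ),
      Loc.{u} {Q.obj C} = Loc.{u} {smod R (ModuleCat.of R (R ⧸ J)), Q.obj P'} ∧
      (∀ j, j ≠ i → Nonempty (P'.homology j ≅ C.homology j)) ∧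
      ∃ u : Fin k → P'.homology i, Submodule.span R (Set.range u) = ⊤ := by
  obtain ⟨P, f, hf, hPp, hPi⟩ := exists_proj C i hC
  have hiso : ∀ j, IsIso (HomologicalComplex.homologyMap f j) := fun j => inferInstance
  let e : ∀ j, P.homology j ≅ C.homology j := fun j =>
    asIso (HomologicalComplex.homologyMap f j)
  obtain ⟨J, π, hπ, u, hu⟩ := module_step (R := R) (fun j => (e i).inv.hom (v j)) (by
    have h1 : Set.range (fun j => (e i).inv.hom (v j)) = (e i).inv.hom '' Set.range v := by
      rw [← Set.range_comp]; rfl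
    rw [h1, ← Submodule.map_span, hv, Submodule.map_top, LinearMap.range_eq_top]
    exact (e i).symm.toLinearEquiv.surjective)
  let A := ModuleCat.of R (R ⧸ J)
  obtain ⟨φ0, φ, h0, h0', hφ, hH⟩ := exists_to_single P i hPi A (ModuleCat.ofHom π) hπ
  let S : ShortComplex (CochainComplex (ModuleCat.{u} R) ℤ) :=
    ShortComplex.mk (kernel.ι φ) φ (by simp)
  have hS : S.ShortExact :=
    { exact := ShortComplex.exact_kernel φ, mono_f := inferInstance, epi_g := hφ }
  have hg : Epi (HomologicalComplex.homologyMap S.g i) := by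
    have h1 : HomologicalComplex.homologyMap S.g i = ModuleCat.ofHom π ≫
        (HomologicalComplex.singleObjHomologySelfIso (.up ℤ) i A).inv := by
      exact (Iso.eq_comp_inv _).mpr hH
    have : Epi (ModuleCat.ofHom π) := (ModuleCat.epi_iff_surjective _).mpr hπ
    rw [h1]; infer_instance
  obtain ⟨hm, hi⟩ := kernel_homology i S hS
    (fun j hj => HomologicalComplex.isZero_single_obj_homology _ _ _ _ hj) hg
  have hT := triangleOfSES_distinguished hS
  refine ⟨J, S.X₁, ?_, fun j hj => ?_, ?_⟩
  · have iPC : Q.obj P ≅ Q.obj C := by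
      have : IsIso (Q.map f) := inferInstance
      exact asIso (Q.map f)
    apply Set.Subset.antisymm
    · have hL := isLocalizingSub_Loc.{u} {smod R (ModuleCat.of R (R ⧸ J)), Q.obj S.X₁}
      have hsub := subset_Loc.{u} {smod R (ModuleCat.of R (R ⧸ J)), Q.obj S.X₁}
      refine Loc_subset hL ?_
      rintro _ rfl
      refine hL.mem_of_iso iPC (hL.mem₂ _ hT (hsub (Or.inr rfl)) ?_)
      exact (smod_mem hL i A).mp (hsub (Or.inl rfl))
    · have hL := isLocalizingSub_Loc.{u} {Q.obj C}
      have hP : Q.obj P ∈ Loc.{u} {Q.obj C} :=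
        hL.mem_of_iso iPC.symm (subset_Loc.{u} _ rfl)
      have hs := single_mem P hPp i hPi hL hP J φ0 h0 h0'
      refine Loc_subset hL ?_
      rintro _ (rfl | rfl)
      · exact (smod_mem hL i A).mpr hs
      · exact hL.mem₁ _ hT hP hs
  · have := hi j hj
    exact ⟨asIso (HomologicalComplex.homologyMap S.f j) ≪≫ e j⟩
  · have hex := hS.homology_exact₂ i
    rw [ShortComplex.moduleCat_exact_iff_range_eq_ker] at hex
    have hker : LinearMap.ker (HomologicalComplex.homologyMap S.g i).hom = LinearMap.ker π := by
      ext x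
      rw [LinearMap.mem_ker, LinearMap.mem_ker]
      have h1 : π x = (HomologicalComplex.singleObjHomologySelfIso (.up ℤ) i A).hom.hom
        ((HomologicalComplex.homologyMap S.g i).hom x) := congr(($hH).hom x).symm
      rw [h1]
      exact (LinearEquiv.map_eq_zero_iff (HomologicalComplex.singleObjHomologySelfIso (.up ℤ) i A).toLinearEquiv).symm
    have hrange : LinearMap.range (HomologicalComplex.homologyMap S.f i).hom = Submodule.span R (Set.range u) := by
      rw [hu, ← hker]; exact hex
    have hmem : ∀ a : Fin k, ∃ y, (HomologicalComplex.homologyMap S.f i).hom y = u a := by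
      intro a
      have : u a ∈ LinearMap.range (HomologicalComplex.homologyMap S.f i).hom := by
        rw [hrange]; exact Submodule.subset_span ⟨a, rfl⟩
      exact this
    choose y hy using hmem
    refine ⟨y, ?_⟩
    have hinj : Function.Injective (HomologicalComplex.homologyMap S.f i).hom :=
      (ModuleCat.mono_iff_injective _).mp (hm i)
    apply Submodule.map_injective_of_injective hinj
    rw [Submodule.map_span, Submodule.map_top, hrange, ← Set.range_comp]
    congr 2
    funext a
    exact hy a
end PartF2

section PartF3
variable {R : Type u} [CommRing R] [HasDerivedCategory.{w'} (ModuleCat.{u} R)]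
open DerivedCategory

lemma span_transport {M N : ModuleCat.{u} R} (e : M ≅ N) {k : ℕ}
    (h : ∃ v : Fin k → M, Submodule.span R (Set.range v) = ⊤) :
    ∃ v : Fin k → N, Submodule.span R (Set.range v) = ⊤ := by
  obtain ⟨v, hv⟩ := h
  refine ⟨fun j => e.hom.hom (v j), ?_⟩
  have h1 : Set.range (fun j => e.hom.hom (v j)) = e.hom.hom '' Set.range v := by
    rw [← Set.range_comp]; rfl
  rw [h1, ← Submodule.map_span, hv, Submodule.map_top, LinearMap.range_eq_top]
  exact e.toLinearEquiv.surjective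

lemma isZero_of_span_zero {M : ModuleCat.{u} R} {k : ℕ} (hk : k = 0)
    (h : ∃ v : Fin k → M, Submodule.span R (Set.range v) = ⊤) : IsZero M := by
  subst hk
  obtain ⟨v, hv⟩ := h
  rw [Set.range_eq_empty, Submodule.span_empty] at hv
  have : Subsingleton M := (Submodule.subsingleton_iff R).mp (subsingleton_of_bot_eq_top hv)
  exact ModuleCat.isZero_of_subsingleton M

lemma main_induction (n : ℕ) : ∀ (g : ℤ →₀ ℕ), (g.sum fun _ a => a) = n →
    ∀ C : CochainComplex (ModuleCat.{u} R) ℤ,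
    (∀ j, ∃ v : Fin (g j) → C.homology j, Submodule.span R (Set.range v) = ⊤) →
    ∃ s : Set (Ideal R), s.Finite ∧
      Loc.{u} {Q.obj C} = Loc.{u} {x | ∃ J ∈ s, x = smod R (ModuleCat.of R (R ⧸ J))} := by
  induction n with
  | zero =>
    intro g hg C hC
    have hg0 : ∀ j, g j = 0 := by
      intro j
      by_contra h
      have h1 := Finset.sum_eq_zero_iff.mp hg j (Finsupp.mem_support_iff.mpr h)
      exact h h1
    refine ⟨∅, Set.finite_empty, ?_⟩
    have hz : IsZero (Q.obj C) := by
      have h0 : IsIso (Q.map (0 : C ⟶ 0)) := by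
        rw [isIso_Q_map_iff_quasiIso, quasiIso_iff]
        intro j
        rw [quasiIsoAt_iff_isIso_homologyMap]
        have z1 := isZero_of_span_zero (hg0 j) (hC j)
        have z2 : IsZero ((0 : CochainComplex (ModuleCat.{u} R) ℤ).homology j) :=
          (HomologicalComplex.homologyFunctor (ModuleCat.{u} R) (.up ℤ) j).map_isZero (isZero_zero _)
        exact ⟨0, z1.eq_of_src _ _, z2.eq_of_src _ _⟩
      exact (Q.map_isZero (isZero_zero _)).of_iso (asIso (Q.map (0 : C ⟶ 0)))
    apply Set.Subset.antisymm
    · have hL := isLocalizingSub_Loc.{u} {x | ∃ J ∈ (∅ : Set (Ideal R)), x = smod R (ModuleCat.of R (R ⧸ J))}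
      refine Loc_subset hL ?_
      rintro _ rfl
      exact hL.mem_of_iso hz.isoZero.symm hL.zero_mem
    · refine Loc_subset (isLocalizingSub_Loc.{u} _) ?_
      rintro _ ⟨J, hJ, _⟩
      exact hJ.elim
  | succ n ih =>
    intro g hg C hC
    have hne : g.support.Nonempty := by
      by_contra h
      rw [Finset.not_nonempty_iff_eq_empty, Finsupp.support_eq_empty] at h
      subst h
      simp at hg
    let i := g.support.max' hne
    have hi : g i ≠ 0 := Finsupp.mem_support_iff.mp (g.support.max'_mem hne)
    have htop : ∀ j, i < j → IsZero (C.homology j) := by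
      intro j hj
      refine isZero_of_span_zero (k := g j) ?_ (hC j)
      by_contra h
      have := g.support.le_max' j (Finsupp.mem_support_iff.mpr h)
      exact absurd hj (not_lt.mpr this)
    obtain ⟨k, hk⟩ := Nat.exists_eq_succ_of_ne_zero hi
    obtain ⟨v, hv⟩ : ∃ v : Fin (k+1) → C.homology i, Submodule.span R (Set.range v) = ⊤ := by
      have := hC i
      rwa [hk] at this
    obtain ⟨J, P', hloc, hj, hu⟩ := main_step C i htop v hv
    let g' : ℤ →₀ ℕ := g.update i k
    have hg' : (g'.sum fun _ a => a) = n := by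
      have h1 : g = g.erase i + Finsupp.single i (g i) := (Finsupp.erase_add_single i g).symm
      have h2 : g' = g.erase i + Finsupp.single i k := Finsupp.update_eq_erase_add_single g i k
      have h3 : (g.sum fun _ a => a) = ((g.erase i).sum fun _ a => a) + g i := by
        conv_lhs => rw [h1]
        rw [Finsupp.sum_add_index' (fun _ => rfl) (fun _ _ _ => rfl), Finsupp.sum_single_index rfl]
      have h4 : (g'.sum fun _ a => a) = ((g.erase i).sum fun _ a => a) + k := by
        rw [h2, Finsupp.sum_add_index' (fun _ => rfl) (fun _ _ _ => rfl), Finsupp.sum_single_index rfl]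
      lia
    obtain ⟨s, hs, hs'⟩ := ih g' hg' P' (by
      intro j
      by_cases hji : j = i
      · rw [hji]
        have : g' i = k := by simp [g']
        rw [this]; exact hu
      · have : g' j = g j := by simp [g', Finsupp.update, hji]
        rw [this]
        obtain ⟨e⟩ := hj j hji
        exact span_transport e.symm (hC j))
    refine ⟨insert J s, hs.insert J, ?_⟩
    rw [hloc]
    apply Set.Subset.antisymm
    · have hL := isLocalizingSub_Loc.{u} {x | ∃ J' ∈ insert J s, x = smod R (ModuleCat.of R (R ⧸ J'))}
      have hsub := subset_Loc.{u} {x | ∃ J' ∈ insert J s, x = smod R (ModuleCat.of R (R ⧸ J'))}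
      refine Loc_subset hL ?_
      rintro _ (rfl | rfl)
      · exact hsub ⟨J, Set.mem_insert _ _, rfl⟩
      · have h1 : Q.obj P' ∈ Loc.{u} {Q.obj P'} := subset_Loc.{u} _ rfl
        rw [hs'] at h1
        refine Loc_subset hL ?_ h1
        rintro _ ⟨J', hJ', rfl⟩
        exact hsub ⟨J', Set.mem_insert_of_mem _ hJ', rfl⟩
    · have hL := isLocalizingSub_Loc.{u} {smod R (ModuleCat.of R (R ⧸ J)), Q.obj P'}
      have hsub := subset_Loc.{u} {smod R (ModuleCat.of R (R ⧸ J)), Q.obj P'}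
      refine Loc_subset hL ?_
      rintro _ ⟨J', rfl | hJ', rfl⟩
      · exact hsub (Or.inl rfl)
      · have h1 : smod R (ModuleCat.of R (R ⧸ J')) ∈ Loc.{u} {Q.obj P'} := by
          rw [hs']; exact subset_Loc.{u} _ ⟨J', hJ', rfl⟩
        refine Loc_subset hL ?_ h1
        rintro _ rfl
        exact hsub (Or.inr rfl)

lemma exists_gens {M : ℤ → ModuleCat.{u} R}
    (h : Module.Finite R (DirectSum ℤ (fun n => ↥(M n)))) :
    ∃ g : ℤ →₀ ℕ, ∀ j, ∃ v : Fin (g j) → M j, Submodule.span R (Set.range v) = ⊤ := by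
  classical
  have hfin : ∀ j, Module.Finite R (M j) := fun j =>
    Module.Finite.of_surjective (DirectSum.component R ℤ (fun n => ↥(M n)) j) (fun x =>
      ⟨DirectSum.lof R ℤ (fun n => ↥(M n)) j x, DirectSum.component.lof_self R _ _⟩)
  obtain ⟨t, ht⟩ := h.fg_top
  let supp : Finset ℤ := t.biUnion fun x => DFinsupp.support x
  have hz : ∀ j, j ∉ supp → Subsingleton (M j) := by
    intro j hj
    refine subsingleton_of_forall_eq 0 fun x => ?_
    have hle : (⊤ : Submodule R (DirectSum ℤ (fun n => ↥(M n)))) ≤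
        LinearMap.ker (DirectSum.component R ℤ (fun n => ↥(M n)) j) := by
      rw [← ht, Submodule.span_le]
      intro y hy
      rw [SetLike.mem_coe, LinearMap.mem_ker]
      by_contra hne
      exact hj (Finset.mem_biUnion.mpr ⟨y, hy, DFinsupp.mem_support_iff.mpr hne⟩)
    have h1 := hle (Submodule.mem_top (x := DirectSum.lof R ℤ (fun n => ↥(M n)) j x))
    rw [LinearMap.mem_ker, DirectSum.component.lof_self] at h1
    exact h1
  have hex : ∀ j, ∃ k : ℕ, (j ∉ supp → k = 0) ∧
      ∃ v : Fin k → M j, Submodule.span R (Set.range v) = ⊤ := by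
    intro j
    by_cases hj : j ∈ supp
    · obtain ⟨k, v, hv⟩ := Module.Finite.exists_fin (R := R) (M := M j)
      exact ⟨k, fun h => absurd hj h, v, hv⟩
    · have := hz j hj
      exact ⟨0, fun _ => rfl, Fin.elim0, Subsingleton.elim _ _⟩
  choose k hk hv using hex
  refine ⟨Finsupp.onFinset supp k (fun j hj => by_contra fun h => hj (hk j h)), hv⟩
end PartF3

/-- Theorem: if `C` is a complex of `R`-modules whose total homology
`H₋(C) = ⨁ₙ Hₙ(C)` is a finitely generated `R`-module, then there are finitely
many ideals `J₁, …, Jₘ` of `R` with `Loc(C) = Loc(R/J₁, …, R/Jₘ)` in `D(R)`. -/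
theorem loc_eq_loc_finitely_many_cyclic_quotients (R : Type u) [CommRing R]
    [HasDerivedCategory.{w'} (ModuleCat.{u} R)]
    (C : CochainComplex (ModuleCat.{u} R) ℤ)
    (hC : Module.Finite R (DirectSum ℤ (fun n => ↥(C.homology n)))) :
    ∃ (m : ℕ) (J : Fin m → Ideal R),
      Loc.{u} {DerivedCategory.Q.obj C} =
        Loc.{u} {x | ∃ i : Fin m, x = smod R (ModuleCat.of R (R ⧸ J i))} := by
  obtain ⟨g, hg⟩ := exists_gens (M := fun n => C.homology n) hC
  obtain ⟨s, hs, h⟩ := main_induction _ g rfl C hg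
  obtain ⟨m, J, -, hJ⟩ := hs.fin_param
  refine ⟨m, J, h.trans ?_⟩
  congr 1
  ext x
  simp only [Set.mem_ofPred_eq, ← hJ, Set.exists_range_iff]
end

section
/- Let R be a commutative ring and let I and J be finitely generated ideals of R. Then Loc(R/I, R/J) = Loc(R/I ⊕ R/J) = Loc(R/(I·J)) = Loc(R/(I ∩ J)) in D(R). -/
open CategoryTheory CategoryTheory.Limits CategoryTheory.Pretriangulated ZeroObject

universe w w' v u

set_option linter.unusedSectionVars false


namespace LocAux

section Homology

variable {A : Type u} [Category.{v} A] [Abelian A] {ι : Type*} [HasColimitsOfShape (Discrete ι) A]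

/-- A family of complexes as a complex of families. -/
noncomputable def fam (K : ι → CochainComplex A ℤ) : CochainComplex (Discrete ι ⥤ A) ℤ where
  X n := Discrete.functor (fun i => (K i).X n)
  d n m := Discrete.natTrans (fun i => (K i.as).d n m)
  shape n m h := by
    ext ⟨i⟩
    exact (K i).shape n m h
  d_comp_d' n m k _ _ := by
    ext ⟨i⟩
    exact (K i).d_comp_d n m k

noncomputable def famMap {K L : ι → CochainComplex A ℤ} (φ : ∀ i, K i ⟶ L i) : fam K ⟶ fam L where
  f n := Discrete.natTrans (fun i => (φ i.as).f n)
  comm' n m _ := by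
    ext ⟨i⟩
    exact (φ i).comm n m

instance colimAdditive : (colim (J := Discrete ι) (C := A)).Additive where
  map_add {F G f g} := by
    apply colimit.hom_ext
    intro j
    simp

/-- the coproduct -/
noncomputable def cop (K : ι → CochainComplex A ℤ) : CochainComplex A ℤ :=
  ((colim (J := Discrete ι) (C := A)).mapHomologicalComplex _).obj (fam K)

noncomputable def copι (K : ι → CochainComplex A ℤ) (i : ι) : K i ⟶ cop K where
  f n := colimit.ι (Discrete.functor (fun i => (K i).X n)) ⟨i⟩
  comm' n m _ := (ι_colimMap (F := (fam K).X m) (G := (fam K).X n) ((fam K).d n m) ⟨i⟩)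

noncomputable def copDesc (K : ι → CochainComplex A ℤ) {L : CochainComplex A ℤ}
    (φ : ∀ i, K i ⟶ L) : cop K ⟶ L where
  f n := colimit.desc (Discrete.functor (fun i => (K i).X n)) (Cofan.mk _ (fun i => (φ i).f n))
  comm' n m _ := by
    apply colimit.hom_ext
    rintro ⟨i⟩
    have h1 : ∀ n, colimit.ι (Discrete.functor (fun i => (K i).X n)) ⟨i⟩ ≫
      colimit.desc (Discrete.functor (fun i => (K i).X n)) (Cofan.mk _ (fun i => (φ i).f n)) =
        (φ i).f n := fun n => colimit.ι_desc _ _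
    have h2 : colimit.ι (Discrete.functor (fun i => (K i).X n)) ⟨i⟩ ≫ (cop K).d n m =
       (K i).d n m ≫ colimit.ι (Discrete.functor (fun i => (K i).X m)) ⟨i⟩ :=
      (ι_colimMap (F := (fam K).X m) (G := (fam K).X n) ((fam K).d n m) ⟨i⟩)
    have h3 := (φ i).comm n m
    refine (Category.assoc _ _ _).symm.trans ?_
    refine Eq.trans (congrArg (· ≫ _) (h1 n)) ?_
    refine Eq.trans ?_ (Category.assoc _ _ _)
    refine Eq.trans ?_ (congrArg (· ≫ _) h2).symm
    refine Eq.trans ?_ (Category.assoc _ _ _).symm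
    refine Eq.trans ?_ (congrArg (_ ≫ ·) (h1 m)).symm
    exact h3

lemma copι_desc (K : ι → CochainComplex A ℤ) {L : CochainComplex A ℤ}
    (φ : ∀ i, K i ⟶ L) (i : ι) : copι K i ≫ copDesc K φ = φ i := by
  ext n
  exact colimit.ι_desc (F := Discrete.functor (fun i => (K i).X n))
    (Cofan.mk _ (fun i => (φ i).f n)) ⟨i⟩

lemma copι_desc_assoc (K : ι → CochainComplex A ℤ) {L : CochainComplex A ℤ}
    (φ : ∀ i, K i ⟶ L) (i : ι) {Z : CochainComplex A ℤ} (h : L ⟶ Z) :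
    copι K i ≫ copDesc K φ ≫ h = φ i ≫ h := by
  rw [← Category.assoc, copι_desc]

lemma cop_hom_ext (K : ι → CochainComplex A ℤ) {L : CochainComplex A ℤ}
    {f g : cop K ⟶ L} (h : ∀ i, copι K i ≫ f = copι K i ≫ g) : f = g := by
  ext n
  apply colimit.hom_ext
  rintro ⟨i⟩
  exact HomologicalComplex.congr_hom (h i) n

noncomputable def copMap {K L : ι → CochainComplex A ℤ} (φ : ∀ i, K i ⟶ L i) : cop K ⟶ cop L :=
  ((colim (J := Discrete ι) (C := A)).mapHomologicalComplex _).map (famMap φ)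

lemma copι_map {K L : ι → CochainComplex A ℤ} (φ : ∀ i, K i ⟶ L i) (i : ι) :
    copι K i ≫ copMap φ = φ i ≫ copι L i := by
  ext n
  exact ι_colimMap (F := (fam L).X n) (G := (fam K).X n) ((famMap φ).f n) ⟨i⟩

lemma copι_map_assoc {K L : ι → CochainComplex A ℤ} (φ : ∀ i, K i ⟶ L i) (i : ι)
    {Z : CochainComplex A ℤ} (h : cop L ⟶ Z) :
    copι K i ≫ copMap φ ≫ h = φ i ≫ copι L i ≫ h := by
  rw [← Category.assoc, copι_map, Category.assoc]

variable [HasExactColimitsOfShape (Discrete ι) A]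

instance colimPH : (colim (J := Discrete ι) (C := A)).PreservesHomology := inferInstance

lemma quasiIso_famMap {K L : ι → CochainComplex A ℤ} (φ : ∀ i, K i ⟶ L i)
    (h : ∀ i, QuasiIso (φ i)) : QuasiIso (famMap φ) := by
  refine ⟨fun n => ?_⟩
  rw [quasiIsoAt_iff_isIso_homologyMap, NatTrans.isIso_iff_isIso_app]
  rintro ⟨i⟩
  have h1 : IsIso (ShortComplex.homologyMap (((evaluation (Discrete ι) A).obj ⟨i⟩).mapShortComplex.map
    ((HomologicalComplex.shortComplexFunctor _ _ n).map (famMap φ)))) :=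
    (quasiIsoAt_iff_isIso_homologyMap _ _).1 ((h i).quasiIsoAt n)
  have h2 := ShortComplex.mapHomologyIso_inv_naturality
    ((HomologicalComplex.shortComplexFunctor _ _ n).map (famMap φ)) ((evaluation (Discrete ι) A).obj ⟨i⟩)
  rw [Iso.comp_inv_eq] at h2
  change IsIso (((evaluation (Discrete ι) A).obj ⟨i⟩).map (ShortComplex.homologyMap ((HomologicalComplex.shortComplexFunctor _ _ n).map (famMap φ))))
  rw [h2]
  exact @IsIso.comp_isIso _ _ _ _ _ _ _ (@IsIso.comp_isIso _ _ _ _ _ _ _ inferInstance h1) inferInstance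

lemma quasiIso_copMap {K L : ι → CochainComplex A ℤ} (φ : ∀ i, K i ⟶ L i)
    (h : ∀ i, QuasiIso (φ i)) : QuasiIso (copMap φ) := by
  have := quasiIso_famMap φ h
  exact HomologicalComplex.quasiIso_map_of_preservesHomology (famMap φ) (colim (J := Discrete ι) (C := A))

lemma cop_homology_ext (K : ι → CochainComplex A ℤ) (k : ℤ) {Z : A}
    {f g : (cop K).homology k ⟶ Z}
    (h : ∀ i, HomologicalComplex.homologyMap (copι K i) k ≫ f =
      HomologicalComplex.homologyMap (copι K i) k ≫ g) : f = g := by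
  let S := (fam K).sc k
  let e := S.mapHomologyIso (colim (J := Discrete ι) (C := A))
  let j : ∀ i, (K i).homology k ⟶ (S.map colim).homology := fun i =>
    HomologicalComplex.homologyMap (copι K i) k
  have key : ∀ (f g : (S.map colim).homology ⟶ Z), (∀ i, j i ≫ f = j i ≫ g) → f = g := by
    clear h f g
    intro f g h
    rw [← cancel_epi e.inv]
    apply colimit.hom_ext
    rintro ⟨i⟩
    let τ : (evaluation (Discrete ι) A).obj ⟨i⟩ ⟶ colim (J := Discrete ι) (C := A) :=
      { app F := colimit.ι F ⟨i⟩ }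
    have h1 := NatTrans.app_homology τ S
    have h2 : colimit.ι S.homology ⟨i⟩ ≫ e.inv =
        (S.mapHomologyIso ((evaluation (Discrete ι) A).obj ⟨i⟩)).inv ≫ j i := by
      rw [Iso.comp_inv_eq]
      exact h1.trans (Category.assoc _ _ _).symm
    refine (Category.assoc _ _ _).symm.trans (Eq.trans ?_ (Category.assoc _ _ _))
    refine (congrArg (· ≫ f) h2).trans (Eq.trans ?_ (congrArg (· ≫ g) h2).symm)
    exact (Category.assoc _ _ _).trans ((congrArg (_ ≫ ·) (h i)).trans (Category.assoc _ _ _).symm)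
  exact key f g h




noncomputable def copHomotopy (K : ι → CochainComplex A ℤ) {L : CochainComplex A ℤ}
    (a : cop K ⟶ L) (h : ∀ i, Homotopy (copι K i ≫ a) 0) : Homotopy a 0 := by
  let H : ∀ p q, (cop K).X p ⟶ L.X q := fun p q =>
    colimit.desc (Discrete.functor (fun i => (K i).X p)) (Cofan.mk _ (fun i => (h i).hom p q))
  have hH : ∀ i p q, (copι K i).f p ≫ H p q = (h i).hom p q := fun i p q =>
    colimit.ι_desc (F := Discrete.functor (fun i => (K i).X p))
      (Cofan.mk _ (fun i => (h i).hom p q)) ⟨i⟩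
  have hext : ∀ {p : ℤ} {Z : A} (f g : (cop K).X p ⟶ Z),
      (∀ i, (copι K i).f p ≫ f = (copι K i).f p ≫ g) → f = g := by
    intro p Z f g hfg
    apply colimit.hom_ext
    rintro ⟨i⟩
    exact hfg i
  refine { hom := H, zero := ?_, comm := ?_ }
  · intro p q hpq
    apply hext
    intro i
    rw [hH, (h i).zero p q hpq, comp_zero]
  · intro n
    apply hext
    intro i
    have h1 := (h i).comm n
    have h2 : (h i).hom = fun p q => (copι K i).f p ≫ H p q := by
      funext p q; exact (hH i p q).symm
    rw [h2, dNext_comp_left, prevD_comp_left] at h1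
    rw [Preadditive.comp_add, Preadditive.comp_add]
    simpa using h1

end Homology

section Derived
open DerivedCategory
variable {A : Type u} [Category.{v} A] [Abelian A] [HasDerivedCategory.{w'} A]

lemma Q_map_eq_zero {X Y : CochainComplex A ℤ} (a : X ⟶ Y) (h : Q.map a = 0) :
    ∃ (X' : CochainComplex A ℤ) (s : X' ⟶ X), IsIso (Q.map s) ∧ Nonempty (Homotopy (s ≫ a) 0) := by
  have h0 : Qh.map ((HomotopyCategory.quotient _ _).map a) = Qh.map ((HomotopyCategory.quotient A (ComplexShape.up ℤ)).map (0 : X ⟶ Y)) :=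
    h.trans (Q.map_zero X Y).symm
  rw [MorphismProperty.map_eq_iff_precomp Qh (HomotopyCategory.quasiIso A (ComplexShape.up ℤ))] at h0
  obtain ⟨X', s, hs, h1⟩ := h0
  obtain ⟨X', rfl⟩ := HomotopyCategory.quotient_obj_surjective X'
  obtain ⟨s, rfl⟩ := (HomotopyCategory.quotient _ _).map_surjective s
  rw [← isIso_Qh_map_iff] at hs
  refine ⟨X', s, hs, ⟨HomotopyCategory.homotopyOfEq _ _ ?_⟩⟩
  rw [Functor.map_comp]
  refine h1.trans ?_
  rw [Functor.map_zero, comp_zero, Functor.map_zero]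

variable {ι : Type*} [HasColimitsOfShape (Discrete ι) A] [HasExactColimitsOfShape (Discrete ι) A]

instance isIso_Q_copMap {K L : ι → CochainComplex A ℤ} (φ : ∀ i, K i ⟶ L i)
    [h : ∀ i, IsIso (Q.map (φ i))] : IsIso (Q.map (copMap φ)) := by
  rw [isIso_Q_map_iff_quasiIso]
  exact quasiIso_copMap φ fun i => (isIso_Q_map_iff_quasiIso _ _).1 (h i)

lemma Q_cop_zero (K : ι → CochainComplex A ℤ) {L : CochainComplex A ℤ}
    (a : cop K ⟶ L) (h : ∀ i, Q.map (copι K i ≫ a) = 0) : Q.map a = 0 := by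
  choose X s hs ht using fun i => Q_map_eq_zero _ (h i)
  have h1 : Q.map (copMap s ≫ a) = 0 := by
    refine (Q_map_eq_of_homotopy _ (copHomotopy X _ fun i => ?_)).trans (Q.map_zero _ _)
    rw [copι_map_assoc]
    exact (ht i).some
  rw [← cancel_epi (Q.map (copMap s)), comp_zero, ← Q.map_comp, h1]

lemma Q_cop_uniq (K : ι → CochainComplex A ℤ) {Y : DerivedCategory A}
    (f g : Q.obj (cop K) ⟶ Y) (h : ∀ i, Q.map (copι K i) ≫ f = Q.map (copι K i) ≫ g) : f = g := by
  obtain ⟨L, ⟨e⟩⟩ : ∃ L, Nonempty (Q.obj L ≅ Y) := ⟨_, ⟨Q.objObjPreimageIso Y⟩⟩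
  rw [← cancel_mono e.inv, ← sub_eq_zero]
  obtain ⟨L', a, s, hs, ha⟩ := left_fac (f ≫ e.inv - g ≫ e.inv)
  rw [ha, Q_cop_zero K a, zero_comp]
  intro i
  rw [← cancel_mono (inv (Q.map s)), zero_comp, Q.map_comp, Category.assoc, ← ha]
  simp [Preadditive.comp_sub, reassoc_of% (h i)]

lemma Q_cop_exists (K : ι → CochainComplex A ℤ) {Y : DerivedCategory A}
    (f : ∀ i, Q.obj (K i) ⟶ Y) : ∃ g : Q.obj (cop K) ⟶ Y, ∀ i, Q.map (copι K i) ≫ g = f i := by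
  obtain ⟨L, ⟨e⟩⟩ : ∃ L, Nonempty (Q.obj L ≅ Y) := ⟨_, ⟨Q.objObjPreimageIso Y⟩⟩
  choose X s hs a ha using fun i => right_fac (f i ≫ e.inv)
  refine ⟨inv (Q.map (copMap s)) ≫ Q.map (copDesc X a) ≫ e.hom, fun i => ?_⟩
  have h1 : Q.map (copι K i) ≫ inv (Q.map (copMap s)) = inv (Q.map (s i)) ≫ Q.map (copι X i) := by
    rw [IsIso.comp_inv_eq, Category.assoc, ← Q.map_comp, copι_map, Q.map_comp,
      IsIso.inv_hom_id_assoc]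
  rw [reassoc_of% h1, ← Q.map_comp_assoc, copι_desc, ← Category.assoc, ← ha]
  simp

noncomputable def copCofan (K : ι → CochainComplex A ℤ) : Cofan (fun i => Q.obj (K i)) :=
  Cofan.mk (Q.obj (cop K)) (fun i => Q.map (copι K i))

noncomputable def copCofanIsColimit (K : ι → CochainComplex A ℤ) : IsColimit (copCofan K) :=
  Cofan.IsColimit.mk _ (fun s => (Q_cop_exists K s.inj).choose)
    (fun s i => (Q_cop_exists K s.inj).choose_spec i)
    (fun s _ hm => Q_cop_uniq K _ _ fun i =>
      (hm i).trans ((Q_cop_exists K s.inj).choose_spec i).symm)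

variable (A ι) in
instance hasCop : HasColimitsOfShape (Discrete ι) (DerivedCategory A) := by
  refine ⟨fun F => ?_⟩
  have h1 : HasColimit (Discrete.functor (fun i => Q.obj (Q.objPreimage (F.obj ⟨i⟩)))) :=
    ⟨⟨_, copCofanIsColimit (fun i => Q.objPreimage (F.obj ⟨i⟩))⟩⟩
  refine @hasColimit_of_iso _ _ _ _ _ _ h1 ?_
  exact Discrete.natIso (fun i => (Q.objObjPreimageIso (F.obj i)).symm)

lemma cop_H_ext (Y : ι → DerivedCategory A) (k : ℤ) {Z : A}
    (f g : (homologyFunctor A k).obj (∐ Y) ⟶ Z)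
    (h : ∀ i, (homologyFunctor A k).map (Sigma.ι Y i) ≫ f =
      (homologyFunctor A k).map (Sigma.ι Y i) ≫ g) : f = g := by
  let K := fun i => Q.objPreimage (Y i)
  let e := fun i => Q.objObjPreimageIso (Y i)
  let φ : Q.obj (cop K) ⟶ ∐ Y := (copCofanIsColimit K).desc (Cofan.mk _ (fun i => (e i).hom ≫ Sigma.ι Y i))
  have hφ : ∀ i, Q.map (copι K i) ≫ φ = (e i).hom ≫ Sigma.ι Y i := fun i =>
    (copCofanIsColimit K).fac (Cofan.mk _ (fun i => (e i).hom ≫ Sigma.ι Y i)) ⟨i⟩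
  let ψ : ∐ Y ⟶ Q.obj (cop K) := Sigma.desc (fun i => (e i).inv ≫ Q.map (copι K i))
  have hψ : ψ ≫ φ = 𝟙 _ := by
    apply Sigma.hom_ext
    intro i
    simp [ψ, hφ]
  have : IsSplitEpi φ := ⟨⟨ψ, hψ⟩⟩
  rw [← cancel_epi ((homologyFunctor A k).map φ),
    ← cancel_epi ((homologyFunctorFactors A k).inv.app (cop K))]
  apply cop_homology_ext
  intro i
  have h1 := (homologyFunctorFactors A k).inv.naturality (copι K i)
  have h2 : (homologyFunctor A k).map (Q.map (copι K i)) ≫ (homologyFunctor A k).map φ = (homologyFunctor A k).map (e i).hom ≫ (homologyFunctor A k).map (Sigma.ι Y i) := by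
    rw [← Functor.map_comp, hφ, Functor.map_comp]
  have h3 : ∀ f : (homologyFunctor A k).obj (∐ Y) ⟶ Z, HomologicalComplex.homologyMap (copι K i) k ≫ (homologyFunctorFactors A k).inv.app (cop K) ≫ (homologyFunctor A k).map φ ≫ f =
     (homologyFunctorFactors A k).inv.app (K i) ≫ (homologyFunctor A k).map (e i).hom ≫ (homologyFunctor A k).map (Sigma.ι Y i) ≫ f := by
    intro f
    rw [← reassoc_of% h2]
    refine (Category.assoc _ _ _).symm.trans ?_
    refine (congrArg (· ≫ _) h1).trans ?_
    exact Category.assoc _ _ _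
  exact (h3 f).trans ((congrArg (fun x => (homologyFunctorFactors A k).inv.app (K i) ≫ (homologyFunctor A k).map (e i).hom ≫ x) (h i)).trans (h3 g).symm)

end Derived


section Tri

variable {T : Type u} [Category.{v} T] [Preadditive T] [HasZeroObject T]
  [HasShift T ℤ] [∀ n : ℤ, (shiftFunctor T n).Additive] [Pretriangulated T]
  {L : Set T}

/-- the object property attached to a set of objects -/
def toP (L : Set T) : ObjectProperty T := fun X => X ∈ L

lemma toP_iso (hL : IsLocalizingSub.{w} L) : (toP L).IsClosedUnderIsomorphisms :=
  ⟨fun e h => hL.mem_of_iso e h⟩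

lemma toP_tri (hL : IsLocalizingSub.{w} L) : (toP L).IsTriangulated := by
  have := toP_iso hL
  have h0 : (toP L).ContainsZero := ⟨⟨0, isZero_zero _, hL.zero_mem⟩⟩
  have h1 : (toP L).IsStableUnderShift ℤ := ⟨fun n => ⟨fun X hX => hL.shift_mem n hX⟩⟩
  have h3 : (toP L).IsTriangulatedClosed₃ :=
    ObjectProperty.IsTriangulatedClosed₃.mk' (fun Tr hTr a b => hL.cone_mem Tr hTr a b)
  have h2 : (toP L).IsTriangulatedClosed₂ :=
    ObjectProperty.IsTriangulatedClosed₂.of_isTriangulatedClosed₃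
  exact { }

lemma ext_mem (hL : IsLocalizingSub.{w} L) (Tr : Triangle T) (hTr : Tr ∈ distinguishedTriangles)
    (h1 : Tr.obj₁ ∈ L) (h3 : Tr.obj₃ ∈ L) : Tr.obj₂ ∈ L := by
  have := toP_iso hL
  have := toP_tri hL
  exact (toP L).ext_of_isTriangulatedClosed₂ Tr hTr h1 h3

lemma isLocalizing_Loc (S : Set T) : IsLocalizingSub.{w} (Loc.{w} S) where
  zero_mem := fun _ h => h.1.zero_mem
  mem_of_iso := fun e hx _ h => h.1.mem_of_iso e (hx _ h)
  shift_mem := fun n _ hx _ h => h.1.shift_mem n (hx _ h)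
  cone_mem := fun Tr hTr h1 h2 _ h => h.1.cone_mem Tr hTr (h1 _ h) (h2 _ h)
  coprod_mem := fun f c hc hf _ h => h.1.coprod_mem f c hc (fun i => hf i _ h)

lemma subset_Loc (S : Set T) : S ⊆ Loc.{w} S := fun _ hx _ h => h.2 hx

lemma Loc_le {S : Set T} (hL : IsLocalizingSub.{w} L) (h : S ⊆ L) : Loc.{w} S ⊆ L :=
  fun _ hx => hx _ ⟨hL, h⟩

section
open Pretriangulated.Opposite Opposite
lemma trW_sigma [IsTriangulated T] {ι : Type w} [HasColimitsOfShape (Discrete ι) T] (hL : IsLocalizingSub.{w} L)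
    {X Y : ι → T} (f : ∀ i, X i ⟶ Y i) (hf : ∀ i, (toP L).trW (f i)) :
    (toP L).trW (Limits.Sigma.map f) := by
  have := toP_iso hL
  have := toP_tri hL
  apply ObjectProperty.trW_of_op
  have hf' : ∀ i, (toP L).op.trW (f i).op := fun i => by
    rw [ObjectProperty.trW_op_iff]; exact hf i
  choose Z a b hT hZ using hf'
  have h1 := productTriangle_distinguished _ hT
  have h2 : (toP L).op (∏ᶜ Z) := by
    change (∏ᶜ Z).unop ∈ L
    have e := (opCoproductIsoProduct (fun i => (Z i).unop)).unop
    exact hL.mem_of_iso e.symm (hL.coprod_mem _ _ (coproductIsCoproduct (fun i => (Z i).unop)) hZ)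
  have h3 : (toP L).op.trW (Limits.Pi.map (fun i => (f i).op)) :=
    ObjectProperty.trW.mk _ h1 h2
  refine ((toP L).op.trW.arrow_mk_iso_iff ?_).1 h3
  refine Arrow.isoMk (opCoproductIsoProduct Y).symm (opCoproductIsoProduct X).symm ?_
  change (opCoproductIsoProduct Y).inv ≫ (Limits.Sigma.map f).op = Limits.Pi.map (fun i => (f i).op) ≫ (opCoproductIsoProduct X).inv
  rw [Iso.inv_comp_eq, ← Category.assoc, Iso.eq_comp_inv]
  apply Pi.hom_ext
  intro i
  rw [Category.assoc, Category.assoc, Limits.Pi.map_π]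
  rw [opCoproductIsoProduct_hom_comp_π]
  have := opCoproductIsoProduct_hom_comp_π (Z := Y) i
  rw [reassoc_of% this]
  rw [← op_comp, ← op_comp, Limits.Sigma.ι_map]
end

lemma trW_cancel [IsTriangulated T] (hL : IsLocalizingSub.{w} L) {X Y Z : T} (f : X ⟶ Y) (g : Y ⟶ Z)
    (hg : (toP L).trW g) (hfg : (toP L).trW (f ≫ g)) : (toP L).trW f := by
  have := toP_iso hL
  have := toP_tri hL
  obtain ⟨Z12, a12, b12, h12⟩ := distinguished_cocone_triangle f
  obtain ⟨Z23, a23, b23, h23, m23⟩ := hg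
  obtain ⟨Z13, a13, b13, h13, m13⟩ := hfg
  have o := (Triangulated.someOctahedron rfl h12 h23 h13)
  refine ⟨Z12, a12, b12, h12, (toP L).ext_of_isTriangulatedClosed₁ _ o.mem m13 m23⟩

lemma telescope_abs [IsTriangulated T] [HasColimitsOfShape (Discrete (ULift.{w} ℕ)) T]
    (hL : IsLocalizingSub.{w} L) (Y : ℕ → T) (t : ∀ n, Y n ⟶ Y (n + 1))
    (ht : ∀ n, (toP L).trW (t n))
    (hs : IsIso (𝟙 (∐ (fun j : ULift.{w} ℕ => Y j.down)) -
      Limits.Sigma.desc (fun j : ULift.{w} ℕ => t j.down ≫ Limits.Sigma.ι (fun j : ULift.{w} ℕ => Y j.down) ⟨j.down + 1⟩))) :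
    Y 0 ∈ L := by
  have := toP_iso hL
  have := toP_tri hL
  let f : ∀ n, Y 0 ⟶ Y n := fun n => Nat.rec (𝟙 _) (fun n φ => φ ≫ t n) n
  have hf0 : f 0 = 𝟙 _ := rfl
  have hf1 : ∀ n, f (n + 1) = f n ≫ t n := fun n => rfl
  have hfW : ∀ n, (toP L).trW (f n) := by
    intro n
    induction n with
    | zero => exact MorphismProperty.id_mem _ _
    | succ n ih => exact MorphismProperty.comp_mem _ _ _ ih (ht n)
  clear_value f
  let YA : ULift.{w} ℕ → T := fun _ => Y 0
  let YB : ULift.{w} ℕ → T := fun j => Y j.down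
  let i : ∀ n, Y 0 ⟶ ∐ YA := fun n => Limits.Sigma.ι YA ⟨n⟩
  let i' : ∀ n, Y n ⟶ ∐ YB := fun n => Limits.Sigma.ι YB ⟨n⟩
  let F : ∐ YA ⟶ ∐ YB := Limits.Sigma.map (fun j => f j.down)
  have hF : (toP L).trW F := trW_sigma hL _ (fun j => hfW j.down)
  have iF : ∀ n, i n ≫ F = f n ≫ i' n := fun n => Limits.Sigma.ι_map _ _
  let s : ∐ YA ⟶ ∐ YA := Limits.Sigma.desc (fun j => i (j.down + 1))
  have is : ∀ n, i n ≫ s = i (n + 1) := fun n => Limits.Sigma.ι_desc _ _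
  let s' : ∐ YB ⟶ ∐ YB := Limits.Sigma.desc (fun j => t j.down ≫ i' (j.down + 1))
  have is' : ∀ n, i' n ≫ s' = t n ≫ i' (n + 1) := fun n => Limits.Sigma.ι_desc _ _
  have hext : ∀ {Z : T} (a b : ∐ YA ⟶ Z), (∀ n, i n ≫ a = i n ≫ b) → a = b := by
    intro Z a b h
    apply Limits.Sigma.hom_ext
    rintro ⟨n⟩
    exact h n
  have hs' : IsIso (𝟙 _ - s') := hs
  let nab : ∐ YA ⟶ Y 0 := Limits.Sigma.desc (fun j => 𝟙 _)
  have inab : ∀ n, i n ≫ nab = 𝟙 _ := fun n => Limits.Sigma.ι_desc _ _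
  let ρ : ℕ → (Y 0 ⟶ ∐ YA) := fun n => Nat.rec 0 (fun n φ => φ - i n) n
  have hρ0 : ρ 0 = 0 := rfl
  have hρ1 : ∀ n, ρ (n + 1) = ρ n - i n := fun n => rfl
  clear_value ρ
  let r : ∐ YA ⟶ ∐ YA := Limits.Sigma.desc (fun j => ρ j.down)
  have ir : ∀ n, i n ≫ r = ρ n := fun n => Limits.Sigma.ι_desc _ _
  clear_value r nab s s' F i i'
  have comm : (𝟙 _ - s) ≫ F = F ≫ (𝟙 _ - s') := by
    apply hext
    intro n
    simp only [Preadditive.sub_comp, Preadditive.comp_sub, Category.id_comp, Category.comp_id]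
    have e1 : i n ≫ F ≫ s' = f n ≫ t n ≫ i' (n+1) := by
      rw [← Category.assoc, iF, Category.assoc, is']
    rw [← Category.assoc (i n) s, is, iF, iF, e1, hf1, Category.assoc]
  have hW : (toP L).trW (𝟙 _ - s) := by
    refine trW_cancel hL _ F hF ?_
    rw [comm]
    exact MorphismProperty.comp_mem _ _ _ hF (ObjectProperty.trW_of_isIso _ _)
  have hr1 : (𝟙 _ - s) ≫ r = 𝟙 _ := by
    apply hext
    intro n
    simp only [Preadditive.sub_comp, Preadditive.comp_sub, Category.id_comp, Category.comp_id]
    rw [← Category.assoc (i n) s, is, ir, ir, hρ1]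
    abel
  have hρs : ∀ n, ρ n ≫ (𝟙 _ - s) = i n - i 0 := by
    intro n
    induction n with
    | zero => rw [hρ0]; simp
    | succ n ih =>
      rw [hρ1, Preadditive.sub_comp, ih, Preadditive.comp_sub, is, Category.comp_id]
      abel
  have hr2 : r ≫ (𝟙 _ - s) = 𝟙 _ - nab ≫ i 0 := by
    apply hext
    intro n
    rw [← Category.assoc, ir, hρs, Preadditive.comp_sub, ← Category.assoc, inab]
    simp
  obtain ⟨Z, g, d, hT, hZ⟩ := hW
  have hmono : Mono (𝟙 _ - s) := ⟨fun a b h => by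
    have := congrArg (· ≫ r) h
    simpa only [Category.assoc, hr1, Category.comp_id] using this⟩
  have hepi : Epi g := (Triangle.mk (𝟙 _ - s) g d).epi₂ hT
    ((Triangle.mk (𝟙 _ - s) g d).mor₃_eq_zero_of_mono₁ hT hmono)
  have hg : (𝟙 _ - s) ≫ g = 0 := comp_distTriang_mor_zero₁₂ _ hT
  have hsn : (𝟙 _ - s) ≫ nab = 0 := by
    apply hext
    intro n
    rw [Preadditive.sub_comp, Preadditive.comp_sub, ← Category.assoc (i n) s, is, Category.id_comp, inab, inab]
    simp
  obtain ⟨q, hq⟩ : ∃ q : Z ⟶ Y 0, nab = g ≫ q := Triangle.yoneda_exact₂ _ hT nab hsn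
  refine hL.mem_of_iso (x := Z) ⟨q, i 0 ≫ g, ?_, ?_⟩ hZ
  · rw [← cancel_epi g, ← Category.assoc, ← hq, ← Category.assoc]
    have : nab ≫ i 0 = 𝟙 _ - r ≫ (𝟙 _ - s) := by rw [hr2]; abel
    rw [this, Preadditive.sub_comp, Category.assoc, hg]
    simp
  · rw [Category.assoc, ← hq, inab]

end Tri


section Der2
open DerivedCategory
variable {A : Type u} [Category.{v} A] [Abelian A] [HasDerivedCategory.{w'} A]
  [HasColimitsOfShape (Discrete (ULift.{w} ℕ)) A] [HasExactColimitsOfShape (Discrete (ULift.{w} ℕ)) A]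
  {L : Set (DerivedCategory A)}

lemma telescope (hL : IsLocalizingSub.{w} L) (Y : ℕ → DerivedCategory A) (t : ∀ n, Y n ⟶ Y (n + 1))
    (ht : ∀ n, (toP L).trW (t n)) (h0 : ∀ n k, (homologyFunctor A k).map (t n) = 0) : Y 0 ∈ L := by
  refine telescope_abs hL Y t ht ?_
  rw [DerivedCategory.isIso_iff]
  intro k
  rw [Functor.map_sub]
  have h1 : (homologyFunctor A k).map (Limits.Sigma.desc (fun j : ULift.{w} ℕ => t j.down ≫
      Limits.Sigma.ι (fun j : ULift.{w} ℕ => Y j.down) ⟨j.down + 1⟩)) = 0 := by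
    apply cop_H_ext
    intro i
    rw [← Functor.map_comp, Limits.Sigma.ι_desc, Functor.map_comp, h0, zero_comp, comp_zero]
  rw [h1, sub_zero]
  infer_instance

lemma isZero_H_shift (M : A) (n k : ℤ) (h : k ≠ -n) :
    IsZero ((homologyFunctor A k).obj (((singleFunctor A 0).obj M)⟦n⟧)) := by
  have e := (homologyFunctor A k).mapIso
    (((singleFunctors A).shiftIso n (-n) 0 (by simp)).app M)
  refine IsZero.of_iso ?_ e
  change IsZero ((homologyFunctor A k).obj ((singleFunctor A (-n)).obj M))
  rcases lt_or_gt_of_ne h with h | h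
  · exact isZero_of_isGE _ (-n) k h
  · exact isZero_of_isLE _ (-n) k h

lemma factA (hL : IsLocalizingSub.{w} L) (Pm : A → Prop)
    (h : ∀ M : Subtype Pm, ∃ (K : Subtype Pm) (F : A) (f : K.1 ⟶ F) (g : F ⟶ M.1) (z : f ≫ g = 0),
      (ShortComplex.mk f g z).ShortExact ∧ (singleFunctor A 0).obj F ∈ L)
    (M : A) (hM : Pm M) : (singleFunctor A 0).obj M ∈ L := by
  have := toP_iso hL
  have := toP_tri hL
  choose K F f g z hS hF using h
  let N : ℕ → Subtype Pm := fun n => Nat.rec ⟨M, hM⟩ (fun _ X => K X) n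
  let Y : ℕ → DerivedCategory A := fun n => ((singleFunctor A 0).obj (N n).1)⟦(n : ℤ)⟧
  let δ : ∀ n, (singleFunctor A 0).obj (N n).1 ⟶ ((singleFunctor A 0).obj (N (n + 1)).1)⟦(1 : ℤ)⟧ :=
    fun n => (hS (N n)).singleδ
  have hδ : ∀ n, (toP L).trW (δ n) := by
    intro n
    have h1 := rot_of_distTriang _ (rot_of_distTriang _ (hS (N n)).singleTriangle_distinguished)
    exact ObjectProperty.trW.mk _ h1 (hL.shift_mem 1 (hF (N n)))
  let t : ∀ n, Y n ⟶ Y (n + 1) := fun n => (δ n)⟦(n : ℤ)⟧' ≫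
    (shiftFunctorAdd' (DerivedCategory A) 1 (n : ℤ) ((n + 1 : ℕ) : ℤ) (by push_cast; ring)).inv.app _
  have ht : ∀ n, (toP L).trW (t n) := fun n =>
    MorphismProperty.comp_mem _ _ _ (ObjectProperty.trW.shift (hδ n) _)
      (ObjectProperty.trW_of_isIso _ _)
  have h0 := telescope hL Y t ht (by
    intro n k
    by_cases hk : k = -(n : ℤ)
    · exact (isZero_H_shift (N (n + 1)).1 ((n + 1 : ℕ) : ℤ) k (by omega)).eq_of_tgt _ _
    · exact (isZero_H_shift (N n).1 (n : ℤ) k hk).eq_of_src _ _)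
  exact hL.mem_of_iso ((shiftFunctorZero (DerivedCategory A) ℤ).app ((singleFunctor A 0).obj M)) h0

lemma ses_mem (hL : IsLocalizingSub.{w} L) {S : ShortComplex A} (hS : S.ShortExact)
    (h1 : (singleFunctor A 0).obj S.X₁ ∈ L) (h3 : (singleFunctor A 0).obj S.X₃ ∈ L) :
    (singleFunctor A 0).obj S.X₂ ∈ L :=
  ext_mem hL _ hS.singleTriangle_distinguished h1 h3

variable {ι : Type w} [HasColimitsOfShape (Discrete ι) A] [HasExactColimitsOfShape (Discrete ι) A]

lemma single_cop_mem (hL : IsLocalizingSub.{w} L) (G : ι → A)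
    (h : ∀ i, (singleFunctor A 0).obj (G i) ∈ L) : (singleFunctor A 0).obj (∐ G) ∈ L := by
  let K : ι → CochainComplex A ℤ := fun i => (HomologicalComplex.single A (ComplexShape.up ℤ) 0).obj (G i)
  have h1 : Q.obj (cop K) ∈ L := hL.coprod_mem _ _ (copCofanIsColimit K) (fun i =>
    hL.mem_of_iso ((singleFunctorIsoCompQ A 0).app (G i)) (h i))
  refine hL.mem_of_iso (Iso.trans (Q.mapIso ?_) ((singleFunctorIsoCompQ A 0).app (∐ G)).symm) h1
  let F := HomologicalComplex.single A (ComplexShape.up ℤ) 0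
  have hc := isColimitCofanMkObjOfIsColimit F G _ (coproductIsCoproduct G)
  refine ⟨copDesc K (fun i => F.map (Limits.Sigma.ι G i)), Cofan.IsColimit.desc hc (copι K), ?_, ?_⟩
  · apply cop_hom_ext
    intro i
    refine (copι_desc_assoc K (fun i => F.map (Limits.Sigma.ι G i)) i _).trans ?_
    exact (Cofan.IsColimit.fac hc _ _).trans (Category.comp_id _).symm
  · apply Cofan.IsColimit.hom_ext hc
    intro i
    refine (Cofan.IsColimit.fac_assoc hc _ _ _).trans ?_
    refine (copι_desc K (fun i => F.map (Limits.Sigma.ι G i)) i).trans ?_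
    exact (Category.comp_id _).symm

end Der2

section Mod
open DerivedCategory
variable {R : Type u} [CommRing R] [HasDerivedCategory.{w'} (ModuleCat.{u} R)]
  {L : Set (DerivedCategory (ModuleCat.{u} R))}

def Kills (I : Ideal R) (M : ModuleCat.{u} R) : Prop := ∀ x ∈ I, x • 𝟙 M = 0

lemma kills_iff (I : Ideal R) (M : ModuleCat.{u} R) :
    Kills I M ↔ ∀ x ∈ I, ∀ m : M, x • m = 0 := by
  constructor
  · intro h x hx m
    have := congrArg (fun f : M ⟶ M => f.hom m) (h x hx)
    exact this
  · intro h x hx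
    ext m
    exact h x hx m

lemma kills_sub (I : Ideal R) {M N : ModuleCat.{u} R} (f : M ⟶ N) [Mono f] (h : Kills I N) :
    Kills I M := by
  intro x hx
  rw [← cancel_mono f, Linear.smul_comp, Category.id_comp, zero_comp]
  have := congrArg (fun g => f ≫ g) (h x hx)
  simpa using this

lemma kills_cop (I : Ideal R) {ι : Type u} (G : ι → ModuleCat.{u} R) (h : ∀ i, Kills I (G i)) :
    Kills I (∐ G) := by
  intro x hx
  apply Limits.Sigma.hom_ext
  intro i
  have := congrArg (fun g => g ≫ Limits.Sigma.ι G i) (h i x hx)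
  simpa using this

lemma kills_quot (I : Ideal R) {J : Ideal R} (h : I ≤ J) : Kills I (ModuleCat.of R (R ⧸ J)) := by
  rw [kills_iff]
  intro x hx m
  obtain ⟨r, rfl⟩ := Ideal.Quotient.mk_surjective m
  change Ideal.Quotient.mk J (x * r) = 0
  rw [Ideal.Quotient.eq_zero_iff_mem]
  exact J.mul_mem_right _ (h hx)

lemma kernel_ses {A : Type*} [Category A] [Abelian A] {X Y : A} (g : X ⟶ Y) [Epi g] :
    (ShortComplex.mk (kernel.ι g) g (kernel.condition g)).ShortExact where
  exact := ShortComplex.exact_kernel g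

lemma mem_of_kills (hL : IsLocalizingSub.{u} L) (I : Ideal R)
    (hI : smod R (ModuleCat.of R (R ⧸ I)) ∈ L) (M : ModuleCat.{u} R) (hM : Kills I M) :
    smod R M ∈ L := by
  refine factA hL (Kills I) ?_ M hM
  rintro ⟨M, hM⟩
  rw [kills_iff] at hM
  let φ : ∀ m : M, ModuleCat.of R (R ⧸ I) ⟶ M := fun m =>
    ModuleCat.ofHom (Submodule.liftQ I (LinearMap.toSpanSingleton R M m) (fun x hx => hM x hx m))
  let g : (∐ fun _ : M => ModuleCat.of R (R ⧸ I)) ⟶ M := Limits.Sigma.desc φ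
  have hg : Epi g := by
    rw [ModuleCat.epi_iff_surjective]
    intro m
    refine ⟨(Limits.Sigma.ι (fun _ : M => ModuleCat.of R (R ⧸ I)) m).hom (Submodule.Quotient.mk 1), ?_⟩
    have h1 : Limits.Sigma.ι (fun _ : M => ModuleCat.of R (R ⧸ I)) m ≫ g = φ m :=
      Limits.Sigma.ι_desc _ _
    have h2 := congrArg (fun f => f.hom (Submodule.Quotient.mk 1)) h1
    refine h2.trans ?_
    change (1 : R) • m = m
    exact one_smul _ _
  exact ⟨⟨kernel g, kills_sub I (kernel.ι g) (kills_cop I _ fun _ => kills_quot I le_rfl)⟩, _,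
    kernel.ι g, g, kernel.condition g, kernel_ses g, single_cop_mem hL _ (fun _ => hI)⟩

lemma prod_ses (M N : Type u) [AddCommGroup M] [Module R M] [AddCommGroup N] [Module R N] :
    (ShortComplex.mk (ModuleCat.ofHom (LinearMap.inl R M N)) (ModuleCat.ofHom (LinearMap.snd R M N))
      (by ext; rfl)).ShortExact where
  exact := by
    rw [ShortComplex.moduleCat_exact_iff]
    rintro ⟨a, b⟩ h
    have h' : b = 0 := h
    subst h'
    exact ⟨a, rfl⟩
  mono_f := by
    rw [ModuleCat.mono_iff_injective]
    exact LinearMap.inl_injective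
  epi_g := by
    rw [ModuleCat.epi_iff_surjective]
    exact LinearMap.snd_surjective

lemma prod_ses' (M N : Type u) [AddCommGroup M] [Module R M] [AddCommGroup N] [Module R N] :
    (ShortComplex.mk (ModuleCat.ofHom (LinearMap.inr R M N)) (ModuleCat.ofHom (LinearMap.fst R M N))
      (by ext; rfl)).ShortExact where
  exact := by
    rw [ShortComplex.moduleCat_exact_iff]
    rintro ⟨a, b⟩ h
    have h' : a = 0 := h
    subst h'
    exact ⟨b, rfl⟩
  mono_f := by
    rw [ModuleCat.mono_iff_injective]
    exact LinearMap.inr_injective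
  epi_g := by
    rw [ModuleCat.epi_iff_surjective]
    exact LinearMap.fst_surjective

lemma mem_of_prod (hL : IsLocalizingSub.{u} L) (M N : Type u) [AddCommGroup M] [Module R M]
    [AddCommGroup N] [Module R N] (h : smod R (ModuleCat.of R (M × N)) ∈ L) :
    smod R (ModuleCat.of R M) ∈ L ∧ smod R (ModuleCat.of R N) ∈ L := by
  have key := factA hL (fun X => X = ModuleCat.of R M ∨ X = ModuleCat.of R N) (by
    rintro ⟨X, rfl | rfl⟩
    · exact ⟨⟨_, Or.inr rfl⟩, _, _, _, _, prod_ses' M N, h⟩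
    · exact ⟨⟨_, Or.inl rfl⟩, _, _, _, _, prod_ses M N, h⟩)
  exact ⟨key _ (Or.inl rfl), key _ (Or.inr rfl)⟩

lemma mem_of_between (hL : IsLocalizingSub.{u} L) (I J K : Ideal R)
    (hI : smod R (ModuleCat.of R (R ⧸ I)) ∈ L) (hJ : smod R (ModuleCat.of R (R ⧸ J)) ∈ L)
    (h1 : I * J ≤ K) (h2 : K ≤ I) : smod R (ModuleCat.of R (R ⧸ K)) ∈ L := by
  let g : ModuleCat.of R (R ⧸ K) ⟶ ModuleCat.of R (R ⧸ I) := ModuleCat.ofHom (Submodule.factor h2)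
  have hg : Epi g := by
    rw [ModuleCat.epi_iff_surjective]
    exact Submodule.factor_surjective h2
  refine ses_mem hL (kernel_ses g) ?_ hI
  refine mem_of_kills hL J hJ _ ?_
  rw [kills_iff]
  intro x hx m
  apply (ModuleCat.mono_iff_injective (kernel.ι g)).1 inferInstance
  have e : g.hom ((kernel.ι g).hom m) = 0 := by
    have := congrArg (fun f => f.hom m) (kernel.condition g)
    exact this
  refine ((kernel.ι g).hom.map_smul x m).trans (Eq.trans ?_ ((kernel.ι g).hom.map_zero).symm)
  generalize (kernel.ι g).hom m = y at e
  obtain ⟨r, rfl⟩ := Ideal.Quotient.mk_surjective (I := K) y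
  have e' : Ideal.Quotient.mk I r = 0 := e
  rw [Ideal.Quotient.eq_zero_iff_mem] at e'
  change Ideal.Quotient.mk K (x * r) = 0
  rw [Ideal.Quotient.eq_zero_iff_mem, mul_comm]
  exact h1 (Ideal.mul_mem_mul e' hx)

lemma loc_between (I J K : Ideal R) (h1 : I * J ≤ K) (h2 : K ≤ I) (h3 : K ≤ J) :
    Loc.{u} {smod R (ModuleCat.of R (R ⧸ I)), smod R (ModuleCat.of R (R ⧸ J))} =
      Loc.{u} {smod R (ModuleCat.of R (R ⧸ K))} := by
  apply Set.Subset.antisymm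
  · refine Loc_le (isLocalizing_Loc _) ?_
    have hK := subset_Loc.{u} {smod R (ModuleCat.of R (R ⧸ K))} rfl
    rintro X (rfl | rfl)
    · exact mem_of_kills (isLocalizing_Loc _) K hK _ (kills_quot K h2)
    · exact mem_of_kills (isLocalizing_Loc _) K hK _ (kills_quot K h3)
  · refine Loc_le (isLocalizing_Loc _) ?_
    rintro X rfl
    exact mem_of_between (isLocalizing_Loc _) I J K (subset_Loc _ (Or.inl rfl))
      (subset_Loc _ (Or.inr rfl)) h1 h2

lemma loc_prod (I J : Ideal R) :
    Loc.{u} {smod R (ModuleCat.of R (R ⧸ I)), smod R (ModuleCat.of R (R ⧸ J))} =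
      Loc.{u} {smod R (ModuleCat.of R ((R ⧸ I) × (R ⧸ J)))} := by
  apply Set.Subset.antisymm
  · refine Loc_le (isLocalizing_Loc _) ?_
    have h := mem_of_prod (isLocalizing_Loc _) _ _
      (subset_Loc.{u} {smod R (ModuleCat.of R ((R ⧸ I) × (R ⧸ J)))} rfl)
    rintro X (rfl | rfl)
    · exact h.1
    · exact h.2
  · refine Loc_le (isLocalizing_Loc _) ?_
    rintro X rfl
    have h1 := subset_Loc.{u} {smod R (ModuleCat.of R (R ⧸ I)), smod R (ModuleCat.of R (R ⧸ J))}
      (Or.inl rfl)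
    have h2 := subset_Loc.{u} {smod R (ModuleCat.of R (R ⧸ I)), smod R (ModuleCat.of R (R ⧸ J))}
      (Or.inr rfl)
    have hL : IsLocalizingSub.{u} (Loc.{u} {smod R (ModuleCat.of R (R ⧸ I)),
      smod R (ModuleCat.of R (R ⧸ J))}) := isLocalizing_Loc _
    exact ses_mem hL (prod_ses (R := R) (R ⧸ I) (R ⧸ J)) h1 h2

end Mod

end LocAux

/-- Theorem: for finitely generated ideals `I`, `J` of `R`,
`Loc(R/I, R/J) = Loc(R/I ⊕ R/J) = Loc(R/(I·J)) = Loc(R/(I ∩ J))` in `D(R)`. -/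
theorem loc_pair_eq_loc_sum_eq_loc_mul_eq_loc_inf (R : Type u) [CommRing R]
    [HasDerivedCategory.{w'} (ModuleCat.{u} R)]
    (I J : Ideal R) (hI : I.FG) (hJ : J.FG) :
    Loc.{u} {smod R (ModuleCat.of R (R ⧸ I)), smod R (ModuleCat.of R (R ⧸ J))} =
      Loc.{u} {smod R (ModuleCat.of R ((R ⧸ I) × (R ⧸ J)))} ∧
    Loc.{u} {smod R (ModuleCat.of R (R ⧸ I)), smod R (ModuleCat.of R (R ⧸ J))} =
      Loc.{u} {smod R (ModuleCat.of R (R ⧸ (I * J)))} ∧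
    Loc.{u} {smod R (ModuleCat.of R (R ⧸ I)), smod R (ModuleCat.of R (R ⧸ J))} =
      Loc.{u} {smod R (ModuleCat.of R (R ⧸ (I ⊓ J)))} := by
  exact ⟨LocAux.loc_prod I J,
    LocAux.loc_between I J (I * J) le_rfl Ideal.mul_le_left Ideal.mul_le_right,
    LocAux.loc_between I J (I ⊓ J) Ideal.mul_le_inf inf_le_left inf_le_right⟩
end
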